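/- arXiv:0910.1897 — 2 statements merged into one kernel-verified Lean document; each statement's English description precedes it below -/
import Mathlib

section
/- Let M be a squat, separable, connected m-manifold (m ≥ 1) and let ℱ be a dimension-one foliation on M × 𝕃₊ having at least one long leaf. Then no leaf of ℱ is homeomorphic, in its leaf topology, to the long line 𝕃. -/
noncomputable section

open Set Topology Filter

universe u

/-! ### The long ray and the long line -/

/-- The first uncountable ordinal `ω₁`, viewed as the linearly ordered set of all
countable ordinals. -/
def Omega1 : Type 1 := {o : Ordinal.{0} // o < (Cardinal.aleph 1).ord}

instance : LinearOrder Omega1 :=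
  inferInstanceAs (LinearOrder {o : Ordinal.{0} // o < (Cardinal.aleph 1).ord})

/-- `ω₁` carries the order topology. -/
instance : TopologicalSpace Omega1 := Preorder.topology Omega1

instance : OrderTopology Omega1 := ⟨rfl⟩

/-- The underlying countable ordinal of an element of `ω₁`. -/
def Omega1.toOrdinal : Omega1 → Ordinal.{0} := Subtype.val

/-- The closed long ray `𝕃≥0`: the set `ω₁ × [0,1)` with the lexicographic order and the
order topology. -/
def ClosedLongRay : Type 1 := Omega1 ×ₗ (Set.Ico (0:ℝ) 1)

instance : LinearOrder ClosedLongRay :=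
  inferInstanceAs (LinearOrder (Omega1 ×ₗ (Set.Ico (0:ℝ) 1)))

instance : TopologicalSpace ClosedLongRay := Preorder.topology ClosedLongRay

instance : OrderTopology ClosedLongRay := ⟨rfl⟩

/-- The long ray `𝕃₊`: the closed long ray with its least element removed, with the
subspace topology (an element is non-minimal iff something is below it). -/
def LongRay : Type 1 := {x : ClosedLongRay // ∃ y, y < x}

instance : LinearOrder LongRay :=
  inferInstanceAs (LinearOrder {x : ClosedLongRay // ∃ y, y < x})

instance : TopologicalSpace LongRay :=
  inferInstanceAs (TopologicalSpace {x : ClosedLongRay // ∃ y, y < x})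

/-- The inclusion of the long ray into the closed long ray. -/
def LongRay.toCLR : LongRay → ClosedLongRay := Subtype.val

/-- The long line `𝕃`: an order-reversed copy of `𝕃₊` placed below the closed long ray
`𝕃≥0`, with the order topology. -/
def LongLine : Type 1 := (OrderDual LongRay) ⊕ₗ ClosedLongRay

instance : LinearOrder LongLine :=
  inferInstanceAs (LinearOrder ((OrderDual LongRay) ⊕ₗ ClosedLongRay))

instance : TopologicalSpace LongLine := Preorder.topology LongLine

instance : OrderTopology LongLine := ⟨rfl⟩

/-- The identification of `𝕃₊` with the set of positive elements of `𝕃`. -/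
def LongRay.inL (a : LongRay) : LongLine := toLex (Sum.inr a.toCLR)

/-- The natural order-reversing involution `x ↦ -x` of the long line, exchanging the two
copies of `𝕃₊` and fixing the least element `0` of `𝕃≥0`. -/
noncomputable def LongLine.neg (x : LongLine) : LongLine :=
  match ofLex x with
  | Sum.inl a => toLex (Sum.inr (OrderDual.ofDual a).toCLR)
  | Sum.inr b =>
      @dite _ (∃ y, y < b) (Classical.dec _)
        (fun h => toLex (Sum.inl (OrderDual.toDual (⟨b, h⟩ : LongRay))))
        (fun _ => x)

/-- A subset of the long ray is a *club* if it is closed (in the topology of `𝕃₊`) and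
unbounded (i.e. cofinal). -/
def ClubInLongRay (C : Set LongRay) : Prop :=
  IsClosed C ∧ ∀ β : LongRay, ∃ α ∈ C, β ≤ α

/-- A topological space `X` is *squat* if every continuous map `𝕃₊ → X` is eventually
constant. -/
def Squat (X : Type*) [TopologicalSpace X] : Prop :=
  ∀ f : LongRay → X, Continuous f → ∃ (β : LongRay) (x : X), ∀ α, β ≤ α → f α = x

/-! ### Manifolds and foliations -/

/-- A (topological) `n`-manifold: a nonempty Hausdorff space in which every point has an
open neighbourhood homeomorphic to `ℝⁿ`. -/
def IsTopManifold (M : Type u) [TopologicalSpace M] (n : ℕ) : Prop :=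
  Nonempty M ∧ T2Space M ∧
    ∀ x : M, ∃ U : Set M, x ∈ U ∧ IsOpen U ∧ Nonempty (U ≃ₜ (Fin n → ℝ))

/-- A foliation of dimension `p` and codimension `q` on a space `M`: a family of charts
`φᵢ : Uᵢ ≃ₜ ℝᵖ × ℝ^q` on open sets covering `M` such that all coordinate transformations
have the form `(x, y) ↦ (g (x, y), h y)`, i.e. the last `q` coordinates of the image
depend only on the last `q` coordinates of the argument. -/
structure Foliation (M : Type u) [TopologicalSpace M] (p q : ℕ) where
  /-- index type of the atlas -/
  ι : Type u
  /-- chart domains -/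
  U : ι → Set M
  /-- the charts -/
  chart : (i : ι) → ((U i) ≃ₜ ((Fin p → ℝ) × (Fin q → ℝ)))
  isOpen : ∀ i, IsOpen (U i)
  covers : ∀ x : M, ∃ i, x ∈ U i
  compat : ∀ i j (x y : M) (hxi : x ∈ U i) (hxj : x ∈ U j) (hyi : y ∈ U i) (hyj : y ∈ U j),
    (chart i ⟨x, hxi⟩).2 = (chart i ⟨y, hyi⟩).2 → (chart j ⟨x, hxj⟩).2 = (chart j ⟨y, hyj⟩).2

namespace Foliation

variable {M : Type u} [TopologicalSpace M] {p q : ℕ}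

/-- The set `φᵢ⁻¹ (ℝᵖ × {y})` in the chart domain `Uᵢ`. -/
def plaqueFibre (F : Foliation M p q) (i : F.ι) (y : Fin q → ℝ) : Set M :=
  {w : M | ∃ hw : w ∈ F.U i, (F.chart i ⟨w, hw⟩).2 = y}

/-- A *plaque* of the foliation: a connected component of a set of the form
`φᵢ⁻¹ (ℝᵖ × {y})`. -/
def IsPlaque (F : Foliation M p q) (P : Set M) : Prop :=
  ∃ (i : F.ι) (y : Fin q → ℝ) (z : M), z ∈ F.plaqueFibre i y ∧
    P = connectedComponentIn (F.plaqueFibre i y) z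

/-- Two points lie in a common plaque. -/
def samePlaque (F : Foliation M p q) (x y : M) : Prop :=
  ∃ P, F.IsPlaque P ∧ x ∈ P ∧ y ∈ P

/-- The leaf relation: the smallest equivalence relation relating any two points that lie
in a common plaque. -/
def leafRel (F : Foliation M p q) : M → M → Prop := Relation.EqvGen F.samePlaque

/-- The *leaves* of the foliation: equivalence classes of the leaf relation. -/
def IsLeaf (F : Foliation M p q) (L : Set M) : Prop :=
  ∃ x : M, L = {y | F.leafRel x y}

/-- The *leaf topology* on a leaf (or any subset) `L`: the topology generated by the
plaques contained in `L`. -/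
def leafTopology (F : Foliation M p q) (L : Set M) : TopologicalSpace L :=
  TopologicalSpace.generateFrom
    {s : Set L | ∃ P, F.IsPlaque P ∧ P ⊆ L ∧ s = Subtype.val ⁻¹' P}

/-- A leaf is *long* if it is not metrisable in its leaf topology. -/
def IsLongLeaf (F : Foliation M p q) (L : Set M) : Prop :=
  F.IsLeaf L ∧ ¬ @TopologicalSpace.MetrizableSpace L (F.leafTopology L)

/-- A subset of `M` is *saturated* by the foliation if it is a union of leaves. -/
def Saturated (F : Foliation M p q) (S : Set M) : Prop :=
  ∀ x ∈ S, ∀ y, F.leafRel x y → y ∈ S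

end Foliation

/-!
Let `h : 𝕃 → M × 𝕃₊` parametrise a leaf. Since `M` is squat, on each end of `𝕃` the first
coordinate of `h` is eventually constant; the second is then eventually strictly increasing and
unbounded, so that over some point of `M` the foliation is vertical above some height. By a
pressing-down argument the set of such points is open, and by separability a single height `β`
works on a dense subset of it. As verticality above `β` is a closed condition and `M` is connected,
the foliation is vertical on `M × (β, ∞)`. Orient its leaves upwards there; this section of the
orientation double cover extends to all of `M × 𝕃₊`, because it continues uniquely down each fibre
`{x} × 𝕃₊`. Pulled back to the connected space `𝕃`, it agrees with the orientation of `𝕃` either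
everywhere or nowhere. But `h` leads upwards towards both ends of `𝕃`, so it agrees at one end and
disagrees at the other.
-/

/-! ### Orders of uncountable cofinality -/

theorem countableInterFilter_atTop_of_bddAbove_range {R : Type*} [Preorder R]
    [IsDirectedOrder R] [Nonempty R] (h : ∀ f : ℕ → R, BddAbove (range f)) :
    CountableInterFilter (atTop : Filter R) := by
  refine ⟨fun S hS hmem => ?_⟩
  obtain rfl | hne := S.eq_empty_or_nonempty
  · simp only [sInter_empty, univ_mem]
  obtain ⟨s, rfl⟩ := hS.exists_eq_range hne
  choose f hf using fun n => mem_atTop_sets.1 (hmem _ (mem_range_self n))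
  obtain ⟨b, hb⟩ := h f
  filter_upwards [Ici_mem_atTop b] with a ha
  rintro _ ⟨n, rfl⟩
  exact hf n a ((hb (mem_range_self n)).trans ha)

theorem exists_mem_frequently_forall {X S : Type*} {l : Filter X} [l.IsCountablyGenerated]
    {l' : Filter S} [CountableInterFilter l'] {P : S → X → Prop}
    (h : ∃ᶠ s in l', ∀ᶠ x in l, P s x) : ∃ G ∈ l, ∃ᶠ s in l', ∀ x ∈ G, P s x := by
  obtain ⟨G, hG⟩ := l.exists_antitone_basis
  by_contra! hcon
  have hnever : ∀ᶠ s in l', ∀ n, ∃ x ∈ G n, ¬ P s x :=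
    eventually_countable_forall.2 fun n => hcon (G n) (hG.mem n)
  obtain ⟨s, hs, hnot⟩ := (h.and_eventually hnever).exists
  obtain ⟨n, -, hn⟩ := hG.1.eventually_iff.1 hs
  obtain ⟨x, hx, hPx⟩ := hnot n
  exact hPx (hn hx)

section UncountableCofinality

variable {R : Type*} [LinearOrder R] [Nonempty R] [NoMaxOrder R]
  [CountableInterFilter (atTop : Filter R)]

theorem exists_forall_lt_of_seq (f : ℕ → R) : ∃ b, ∀ n, f n < b :=
  (eventually_countable_forall.2 fun n => eventually_gt_atTop (f n)).exists

theorem not_bddAbove_image_of_strictMonoOn_Ici {S : Type*} [ConditionallyCompleteLinearOrder S]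
    [TopologicalSpace S] [OrderTopology S] [FirstCountableTopology S] {r : R → S} {a : R}
    (hr : StrictMonoOn r (Ici a)) : ¬ BddAbove (r '' Ici a) := by
  intro hbdd
  have hne : (r '' Ici a).Nonempty := nonempty_Ici.image r
  obtain ⟨u, -, hu, hmem⟩ := exists_seq_tendsto_sSup hne hbdd
  choose t hat ht using hmem
  obtain ⟨b, hb⟩ := exists_forall_lt_of_seq t
  obtain ⟨c, hbc⟩ := exists_gt b
  have hab : a ≤ b := (hat 0 : a ≤ t 0).trans (hb 0).le
  have hsup : sSup (r '' Ici a) ≤ r b :=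
    le_of_tendsto hu (.of_forall fun n => ht n ▸ (hr (hat n) hab (hb n)).le)
  exact ((le_csSup hbdd (mem_image_of_mem r (hab.trans hbc.le))).trans hsup).not_gt
    (hr hab (hab.trans hbc.le) hbc)

end UncountableCofinality

section CompleteUncountableCofinality

variable {R : Type*} [ConditionallyCompleteLinearOrder R] [Nonempty R] [NoMaxOrder R]
  [CountableInterFilter (atTop : Filter R)] [TopologicalSpace R] [OrderTopology R]

theorem exists_leapfrog_seq (g : R → R) (b : R) :
    ∃ (s : ℕ → R) (l : R), Tendsto s atTop (𝓝 l) ∧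
      ∀ n, b < s n ∧ s n < s (n + 1) ∧ g (s n) < s (n + 1) ∧ s n < l := by
  choose next hnext using fun a : R => exists_gt (max b (max a (g a)))
  simp only [max_lt_iff] at hnext
  let s : ℕ → R := fun n => next^[n + 1] b
  have hs : ∀ n, s (n + 1) = next (s n) := fun n => Function.iterate_succ_apply' next (n + 1) b
  have hmono : StrictMono s := strictMono_nat_of_lt_succ fun n => hs n ▸ (hnext (s n)).2.1
  obtain ⟨c, hc⟩ := exists_forall_lt_of_seq s
  have hbdd : BddAbove (range s) := ⟨c, forall_mem_range.2 fun n => (hc n).le⟩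
  refine ⟨s, ⨆ n, s n, tendsto_atTop_ciSup hmono.monotone hbdd, fun n =>
    ⟨(hnext b).1.trans_le (hmono.monotone n.zero_le), hmono n.lt_succ_self,
      hs n ▸ (hnext (s n)).2.2, (hmono n.lt_succ_self).trans_le (le_ciSup hbdd _)⟩⟩

/-- A pressing-down lemma in the style of Fodor. -/
theorem exists_frequently_le_of_forall_lt_self {f : R → R} {β : R} (hf : ∀ s > β, f s < s) :
    ∃ γ, ∃ᶠ s in atTop, f s ≤ γ := by
  by_contra! hcon
  simp only [eventually_atTop] at hcon
  choose g hg using hcon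
  obtain ⟨s, l, hs, h⟩ := exists_leapfrog_seq g β
  have hl : l ≤ f l := le_of_tendsto hs <| .of_forall fun n =>
    (hg (s n) l ((h n).2.2.1.le.trans (h (n + 1)).2.2.2.le)).le
  exact hl.not_gt (hf l ((h 0).1.trans (h 0).2.2.2))

theorem eventuallyConst_of_continuousOn_Ioi {E : Type*} [MetricSpace E] {f : R → E} {γ : R}
    (hf : ContinuousOn f (Ioi γ)) : EventuallyConst f atTop := by
  have hosc : ∀ n : ℕ, ∃ b, ∀ s ≥ b, dist (f s) (f b) < 1 / ((n : ℝ) + 1) := by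
    by_contra! hcon
    obtain ⟨n, hn⟩ := hcon
    choose g hg hdist using hn
    obtain ⟨s, l, hs, h⟩ := exists_leapfrog_seq g γ
    have hfl : ContinuousAt f l := hf.continuousAt (Ioi_mem_nhds ((h 0).1.trans (h 0).2.2.2))
    have hgs : Tendsto (fun n => g (s n)) atTop (𝓝 l) :=
      tendsto_of_tendsto_of_tendsto_of_le_of_le hs (hs.comp (tendsto_add_atTop_nat 1))
        (fun n => hg (s n)) fun n => (h n).2.2.1.le
    have hlim : Tendsto (fun n => dist (f (g (s n))) (f (s n))) atTop (𝓝 0) :=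
      dist_self (f l) ▸ (hfl.tendsto.comp hgs).dist (hfl.tendsto.comp hs)
    exact (ge_of_tendsto' hlim fun n => hdist (s n)).not_gt Nat.one_div_pos_of_nat
  choose b hb using hosc
  obtain ⟨c, hc⟩ := exists_forall_lt_of_seq b
  refine eventuallyConst_atTop.2 ⟨c, fun s hs => eq_of_forall_dist_le fun ε hε => ?_⟩
  obtain ⟨n, hn⟩ := exists_nat_one_div_lt (half_pos hε)
  have hsb := hb n s ((hc n).le.trans hs)
  have hcb := hb n c (hc n).le
  linarith [dist_triangle_right (f s) (f c) (f (b n))]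

end CompleteUncountableCofinality

/-! ### Locally constant functions and continuous injections -/

theorem eq_of_isPreconnected_of_eventually_eq {X α : Type*} [TopologicalSpace X] {s : Set X}
    (hs : IsPreconnected s) {f : X → α} (hf : ∀ x ∈ s, ∀ᶠ y in 𝓝[s] x, f x = f y) {x y : X}
    (hx : x ∈ s) (hy : y ∈ s) : f x = f y :=
  hs.induction₂ (fun x y => f x = f y) hf (fun _ _ _ _ _ _ => Eq.trans)
    (fun _ _ _ _ => Eq.symm) hx hy

section ContinuousInjections

variable {R S : Type*} [ConditionallyCompleteLinearOrder R] [DenselyOrdered R]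
  [TopologicalSpace R] [OrderTopology R] [LinearOrder S] [TopologicalSpace S]

theorem strictMonoOn_or_strictAntiOn_of_ordConnected [OrderClosedTopology S] {f : R → S}
    {s : Set R} [OrdConnected s] (hf : ContinuousOn f s) (hinj : InjOn f s) :
    StrictMonoOn f s ∨ StrictAntiOn f s := by
  obtain rfl | hs := s.eq_empty_or_nonempty
  · exact .inl fun _ hx => hx.elim
  have : Inhabited s := ⟨⟨_, hs.some_mem⟩⟩
  exact (hf.domRestrict.strictMono_of_inj hinj.injective).imp
    strictMono_domRestrict.mp strictAntiOn_iff_strictAnti.mpr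

theorem nhds_le_map_nhds_of_continuousOn_injOn [NoMinOrder R] [NoMaxOrder R] [OrderTopology S]
    {f : R → S} {I : Set R} {t : R} (hI : I ∈ 𝓝 t) (hf : ContinuousOn f I) (hinj : InjOn f I) :
    𝓝 (f t) ≤ map f (𝓝 t) := by
  intro N hN
  obtain ⟨l, r, htlr, hlr⟩ := mem_nhds_iff_exists_Ioo_subset.1 (inter_mem hI (mem_map.1 hN))
  obtain ⟨a, hla, hat⟩ := exists_between htlr.1
  obtain ⟨b, htb, hbr⟩ := exists_between htlr.2
  have hab : Icc a b ⊆ I ∩ f ⁻¹' N := (Icc_subset_Ioo hla hbr).trans hlr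
  have ha : a ∈ Icc a b := left_mem_Icc.2 (hat.trans htb).le
  have hb : b ∈ Icc a b := right_mem_Icc.2 (hat.trans htb).le
  have ht : t ∈ Icc a b := ⟨hat.le, htb.le⟩
  have hcont : ContinuousOn f (Icc a b) := hf.mono fun _ hx => (hab hx).1
  have himage : f '' Icc a b ⊆ N := image_subset_iff.2 fun _ hx => (hab hx).2
  rcases strictMonoOn_or_strictAntiOn_of_ordConnected hcont (hinj.mono fun _ hx => (hab hx).1) with
    hmono | hanti
  · exact mem_of_superset (Icc_mem_nhds (hmono ha ht hat) (hmono ht hb htb))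
      ((intermediate_value_Icc (hat.trans htb).le hcont).trans himage)
  · exact mem_of_superset (Icc_mem_nhds (hanti ht hb htb) (hanti ha ht hat))
      ((intermediate_value_Icc' (hat.trans htb).le hcont).trans himage)

end ContinuousInjections

/-! ### The long ray and the long line as ordered spaces -/

instance Omega1.instOrderBot : OrderBot Omega1 where
  bot := ⟨0, by rw [Cardinal.ord_aleph]; exact Ordinal.omega_pos 1⟩
  bot_le o := (zero_le : (0 : Ordinal) ≤ o.1)

instance Omega1.instWellFoundedLT : WellFoundedLT Omega1 :=
  inferInstanceAs (WellFoundedLT {o : Ordinal.{0} // o < (Cardinal.aleph 1).ord})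

theorem Omega1.exists_forall_lt (f : ℕ → Omega1) : ∃ b, ∀ n, f n < b := by
  have hlt : ∀ n, (f n).1 < Ordinal.omega 1 := fun n => (f n).2.trans_eq (Cardinal.ord_aleph 1)
  have hsucc : Order.succ (⨆ n, (f n).1) < (Cardinal.aleph 1).ord :=
    ((Cardinal.isSuccLimit_omega 1).succ_lt (Ordinal.iSup_lt_omega_one hlt)).trans_eq
      (Cardinal.ord_aleph 1).symm
  exact ⟨⟨_, hsucc⟩, fun n => Order.lt_succ_of_le (Ordinal.le_iSup (fun n => (f n).1) n)⟩

namespace ClosedLongRay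

/-- The point of the closed long ray with the given `ω₁`- and `[0,1)`-coordinates. -/
def mk (o : Omega1) (r : Ico (0 : ℝ) 1) : ClosedLongRay := toLex (o, r)

/-- The `ω₁`-coordinate of a point of the closed long ray. -/
def fst (x : ClosedLongRay) : Omega1 := (ofLex x).1

/-- The `[0,1)`-coordinate of a point of the closed long ray. -/
def snd (x : ClosedLongRay) : Ico (0 : ℝ) 1 := (ofLex x).2

theorem lt_iff {x y : ClosedLongRay} : x < y ↔ x.fst < y.fst ∨ x.fst = y.fst ∧ x.snd < y.snd :=
  Prod.Lex.lt_iff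

theorem le_iff {x y : ClosedLongRay} : x ≤ y ↔ x.fst < y.fst ∨ x.fst = y.fst ∧ x.snd ≤ y.snd :=
  Prod.Lex.le_iff

theorem exists_forall_lt (f : ℕ → ClosedLongRay) : ∃ b, ∀ n, f n < b := by
  obtain ⟨o, ho⟩ := Omega1.exists_forall_lt fun n => (f n).fst
  exact ⟨mk o ⟨0, by simp⟩, fun n => lt_iff.2 (.inl (ho n))⟩

instance : OrderBot ClosedLongRay where
  bot := mk ⊥ ⟨0, by simp⟩
  bot_le x := le_iff.2 <| (bot_le (a := x.fst)).lt_or_eq.imp_right fun h => ⟨h, x.snd.2.1⟩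

instance : DenselyOrdered ClosedLongRay :=
  inferInstanceAs (DenselyOrdered (Omega1 ×ₗ Ico (0 : ℝ) 1))

instance : NoMaxOrder ClosedLongRay :=
  ⟨fun x => (exists_forall_lt fun _ => x).imp fun _ h => h 0⟩

theorem exists_isGLB {S : Set ClosedLongRay} (hS : S.Nonempty) : ∃ a, IsGLB S a := by
  obtain ⟨_, ⟨x₀, hx₀, rfl⟩, hmin⟩ := wellFounded_lt.has_min (fst '' S) (hS.image fst)
  replace hmin : ∀ x ∈ S, x₀.fst ≤ x.fst := fun x hx => not_lt.1 (hmin _ (mem_image_of_mem fst hx))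
  let T : Set ℝ := {r | ∃ x ∈ S, x.fst = x₀.fst ∧ (x.snd : ℝ) = r}
  have hx₀T : (x₀.snd : ℝ) ∈ T := ⟨x₀, hx₀, rfl, rfl⟩
  have hT : ∀ r ∈ T, 0 ≤ r := by
    rintro _ ⟨x, -, -, rfl⟩
    exact x.snd.2.1
  refine ⟨mk x₀.fst ⟨sInf T, le_csInf ⟨_, hx₀T⟩ hT, (csInf_le ⟨0, hT⟩ hx₀T).trans_lt x₀.snd.2.2⟩,
    fun x hx => le_iff.2 ?_, fun y hy => le_iff.2 ?_⟩
  · exact (hmin x hx).lt_or_eq.imp_right fun h => ⟨h, csInf_le ⟨0, hT⟩ ⟨x, hx, h.symm, rfl⟩⟩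
  · refine (le_iff.1 (hy hx₀)).imp_right fun ⟨h, _⟩ => ⟨h, le_csInf ⟨_, hx₀T⟩ ?_⟩
    rintro _ ⟨x, hx, hxx₀, rfl⟩
    exact ((le_iff.1 (hy hx)).resolve_left (by rw [h, hxx₀]; exact lt_irrefl _)).2

open scoped Classical in
instance : ConditionallyCompleteLinearOrder ClosedLongRay where
  __ := (inferInstance : LinearOrder ClosedLongRay)
  __ := LinearOrder.toLattice
  __ :=
    letI : InfSet ClosedLongRay :=
      ⟨fun S => if hS : S.Nonempty then (exists_isGLB hS).choose else ⊥⟩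
    conditionallyCompleteLatticeOfLatticeOfsInf ClosedLongRay fun S _ hS => by
      change IsGLB S (if hS : S.Nonempty then (exists_isGLB hS).choose else ⊥)
      exact dif_pos hS ▸ (exists_isGLB hS).choose_spec
  csSup_of_not_bddAbove S hS := by
    have hbot : (exists_isGLB (univ_nonempty (α := ClosedLongRay))).choose = ⊥ :=
      le_bot_iff.1 ((exists_isGLB univ_nonempty).choose_spec.1 (mem_univ ⊥))
    simp only [sSup, sInf, upperBounds_empty, univ_nonempty, dif_pos, hbot]
    exact dif_neg hS
  csInf_of_not_bddBelow S hS := (hS (OrderBot.bddBelow S)).elim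

end ClosedLongRay

namespace LongRay

instance : OrdConnected {x : ClosedLongRay | ∃ y, y < x} :=
  ⟨fun _ ⟨y, hy⟩ _ _ _ hz => ⟨y, hy.trans_le hz.1⟩⟩

theorem exists_forall_lt (f : ℕ → LongRay) : ∃ b, ∀ n, f n < b := by
  obtain ⟨b, hb⟩ := ClosedLongRay.exists_forall_lt fun n => (f n).toCLR
  exact ⟨⟨b, _, hb 0⟩, hb⟩

instance : Inhabited LongRay :=
  ⟨⟨(exists_gt (⊥ : ClosedLongRay)).choose, ⊥, (exists_gt (⊥ : ClosedLongRay)).choose_spec⟩⟩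

instance : NoMaxOrder LongRay :=
  ⟨fun x => (exists_forall_lt fun _ => x).imp fun _ h => h 0⟩

instance : CountableInterFilter (atTop : Filter LongRay) :=
  countableInterFilter_atTop_of_bddAbove_range fun f =>
    (exists_forall_lt f).imp fun _ h => forall_mem_range.2 fun n => (h n).le

instance : DenselyOrdered LongRay where
  dense a b hab := by
    obtain ⟨c, hac, hcb⟩ := exists_between (α := ClosedLongRay) hab
    exact ⟨⟨c, _, hac⟩, hac, hcb⟩

instance : NoMinOrder LongRay where
  exists_lt a := by
    obtain ⟨y, hya⟩ := a.2
    obtain ⟨c, hyc, hca⟩ := exists_between hya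
    exact ⟨⟨c, y, hyc⟩, hca⟩

instance : ConditionallyCompleteLinearOrder LongRay :=
  letI : Inhabited {x : ClosedLongRay | ∃ y, y < x} := inferInstanceAs (Inhabited LongRay)
  inferInstanceAs (ConditionallyCompleteLinearOrder {x : ClosedLongRay | ∃ y, y < x})

instance : OrderTopology LongRay :=
  orderTopology_of_ordConnected (t := {x : ClosedLongRay | ∃ y, y < x})

theorem continuous_toCLR : Continuous toCLR := continuous_subtype_val

theorem not_strictAntiOn_Ici {R : Type*} [LinearOrder R] [Nonempty R] [NoMaxOrder R]
    [CountableInterFilter (atTop : Filter R)] {r : R → LongRay} {a : R} :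
    ¬ StrictAntiOn r (Ici a) := by
  intro hr
  obtain ⟨_, ⟨b, hab, rfl⟩, hmin⟩ :=
    wellFounded_lt.has_min ((fun t => (r t).toCLR.fst) '' Ici a) (nonempty_Ici.image _)
  replace hr : StrictAntiOn r (Ici b) := hr.mono (Ici_subset_Ici.2 hab)
  have hfst : ∀ t ∈ Ici b, (r t).toCLR.fst = (r b).toCLR.fst := fun t hbt =>
    (hr.antitoneOn self_mem_Ici hbt hbt |> ClosedLongRay.le_iff.1).elim
      (fun h => absurd h (hmin _ ⟨t, le_trans hab hbt, rfl⟩)) And.left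
  have hsnd : StrictMonoOn (fun t => OrderDual.toDual ((r t).toCLR.snd : ℝ)) (Ici b) :=
    fun s hs t ht hst => (ClosedLongRay.lt_iff.1 (hr hs ht hst)).elim
      (fun h => absurd ((hfst t ht).trans (hfst s hs).symm) h.ne) And.right
  refine not_bddAbove_image_of_strictMonoOn_Ici hsnd ⟨OrderDual.toDual 0, ?_⟩
  rintro _ ⟨t, -, rfl⟩
  exact (r t).toCLR.snd.2.1

end LongRay

namespace LongLine

/-- The inclusion of the closed long ray as the nonnegative half of the long line. -/
def pos (x : ClosedLongRay) : LongLine := toLex (Sum.inr x)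

theorem strictMono_pos : StrictMono pos := fun _ _ hxy => Sum.Lex.inr_lt_inr_iff.2 hxy

theorem exists_pos_eq_of_pos_le {x : ClosedLongRay} {z : LongLine} (h : pos x ≤ z) :
    ∃ y, pos y = z := by
  rcases z with z | z
  · exact absurd h Sum.Lex.not_inr_le_inl
  · exact ⟨z, rfl⟩

theorem continuous_pos : Continuous pos := by
  have : OrdConnected (range pos) := ⟨by
    rintro _ ⟨x, rfl⟩ _ - z hz
    exact exists_pos_eq_of_pos_le hz.1⟩
  exact (strictMono_pos.isEmbedding_of_ordConnected this).continuous

theorem neg_pos_bot : neg (pos ⊥) = pos ⊥ :=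
  dif_neg fun ⟨_, hy⟩ => not_lt_bot hy

theorem neg_pos_toCLR (a : LongRay) : neg (pos a.toCLR) = toLex (Sum.inl (OrderDual.toDual a)) :=
  dif_pos a.2

theorem exists_eq_pos_or_eq_neg_pos (z : LongLine) : ∃ x, z = pos x ∨ z = neg (pos x) := by
  rcases z with a | x
  · exact ⟨_, .inr (neg_pos_toCLR (OrderDual.ofDual a)).symm⟩
  · exact ⟨x, .inl rfl⟩

theorem involutive_neg : Function.Involutive neg := by
  have hpos : ∀ x, neg (neg (pos x)) = pos x := fun x => by
    obtain rfl | hx := eq_bot_or_bot_lt x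
    · rw [neg_pos_bot, neg_pos_bot]
    · exact congrArg neg (neg_pos_toCLR ⟨x, ⊥, hx⟩)
  intro z
  obtain ⟨x, rfl | rfl⟩ := exists_eq_pos_or_eq_neg_pos z
  exacts [hpos x, congrArg neg (hpos x)]

theorem strictAnti_neg : StrictAnti neg := by
  have hpos : StrictAnti (neg ∘ pos) := fun x y hxy => by
    obtain ⟨b, rfl⟩ : ∃ b : LongRay, b.toCLR = y := ⟨⟨y, x, hxy⟩, rfl⟩
    obtain rfl | hx := eq_bot_or_bot_lt x
    · simp only [Function.comp, neg_pos_toCLR, neg_pos_bot]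
      exact Sum.Lex.inl_lt_inr _ _
    · obtain ⟨a, rfl⟩ : ∃ a : LongRay, a.toCLR = x := ⟨⟨x, ⊥, hx⟩, rfl⟩
      simp only [Function.comp, neg_pos_toCLR]
      exact Sum.Lex.inl_lt_inl_iff.2 hxy
  intro z w hzw
  obtain ⟨x, rfl | rfl⟩ := exists_eq_pos_or_eq_neg_pos z
  · obtain ⟨y, rfl⟩ := exists_pos_eq_of_pos_le hzw.le
    exact hpos (strictMono_pos.lt_iff_lt.1 hzw)
  obtain ⟨y, rfl | rfl⟩ := exists_eq_pos_or_eq_neg_pos w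
  · rw [involutive_neg]
    refine lt_of_le_of_ne ?_ fun h => hzw.ne (by rw [← h, involutive_neg])
    exact (hpos.antitone bot_le).trans (neg_pos_bot.trans_le (strictMono_pos.monotone bot_le))
  · rw [involutive_neg, involutive_neg]
    exact strictMono_pos (hpos.lt_iff_gt.1 hzw)

theorem continuous_neg : Continuous neg :=
  continuous_ofDual.comp (StrictMono.orderIsoOfRightInverse (OrderDual.toDual ∘ neg)
    strictAnti_neg.dual_right (neg ∘ OrderDual.ofDual) involutive_neg).continuous

instance : PreconnectedSpace LongLine where
  isPreconnected_univ := by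
    have hcover : range pos ∪ range (neg ∘ pos) = univ := eq_univ_of_forall fun z => by
      obtain ⟨x, rfl | rfl⟩ := exists_eq_pos_or_eq_neg_pos z
      exacts [.inl ⟨x, rfl⟩, .inr ⟨x, rfl⟩]
    exact hcover ▸ (isPreconnected_range continuous_pos).union (pos ⊥) ⟨⊥, rfl⟩ ⟨⊥, neg_pos_bot⟩
      (isPreconnected_range (continuous_neg.comp continuous_pos))

end LongLine

/-! ### Comparing orientations of one-dimensional leaves -/

section Orientation

variable {X Y A B D : Type*} [TopologicalSpace X] [TopologicalSpace Y]
  [LinearOrder A] [LinearOrder B] [LinearOrder D]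

/-- Two functions `f` and `g` have the same direction of increase near `p` along the leaves, where
`r x y` says that `x` and `y` are on the same leaf locally. -/
def CoOriented (r : X → X → Prop) (f : X → A) (g : X → B) (p : X) : Prop :=
  ∀ᶠ z in 𝓝 p ×ˢ 𝓝 p, r z.1 z.2 → (f z.1 < f z.2 ↔ g z.1 < g z.2)

/-- Two functions `f` and `g` have opposite directions of increase near `p` along the leaves. -/
def ContraOriented (r : X → X → Prop) (f : X → A) (g : X → B) (p : X) : Prop :=
  CoOriented r f (OrderDual.toDual ∘ g) p

/-- The function `f` is not locally antitone at `p` along the leaves. -/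
def IncreasesNear (r : X → X → Prop) (f : X → A) (p : X) : Prop :=
  ∃ᶠ z in 𝓝 p ×ˢ 𝓝 p, r z.1 z.2 ∧ f z.1 < f z.2

variable {r : X → X → Prop} {f : X → A} {g : X → B} {k : X → D} {p : X}

namespace CoOriented

theorem symm (h : CoOriented r f g p) : CoOriented r g f p :=
  h.mono fun _ hz hr => (hz hr).symm

theorem trans (hfg : CoOriented r f g p) (hgk : CoOriented r g k p) : CoOriented r f k p :=
  (hfg.and hgk).mono fun _ hz hr => (hz.1 hr).trans (hz.2 hr)

theorem eventually (h : CoOriented r f g p) : ∀ᶠ q in 𝓝 p, CoOriented r f g q := by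
  simp only [CoOriented, ← nhds_prod_eq] at h ⊢
  exact (continuous_id.prodMk continuous_id).continuousAt.eventually
    (eventually_eventually_nhds.2 h)

theorem comap {s : Y → Y → Prop} {φ : Y → X} {y : Y} (h : CoOriented r f g (φ y))
    (hφ : ContinuousAt φ y) (hs : ∀ᶠ z in 𝓝 y ×ˢ 𝓝 y, s z.1 z.2 → r (φ z.1) (φ z.2)) :
    CoOriented s (f ∘ φ) (g ∘ φ) y :=
  ((Tendsto.prodMap hφ hφ).eventually h |>.and hs).mono fun _ hz hsz => hz.1 (hz.2 hsz)

theorem toDual [Std.Symm r] (h : CoOriented r f g p) :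
    CoOriented r (OrderDual.toDual ∘ f) (OrderDual.toDual ∘ g) p :=
  (tendsto_prod_swap.eventually h).mono fun _ hz hrz => hz (symm_of r hrz)

theorem increasesNear (h : CoOriented r f g p) (hf : IncreasesNear r f p) : IncreasesNear r g p :=
  (hf.and_eventually h).mono fun _ hz => ⟨hz.1.1, (hz.2 hz.1.1).1 hz.1.2⟩

theorem not_contraOriented (h : CoOriented r f g p) (hf : IncreasesNear r f p) :
    ¬ ContraOriented r f g p := fun h' =>
  let ⟨_, ⟨hr, hlt⟩, hz, hz'⟩ := (hf.and_eventually (h.and h')).exists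
  lt_asymm ((hz hr).1 hlt) ((hz' hr).1 hlt)

end CoOriented

theorem IncreasesNear.toDual [Std.Symm r] (hf : IncreasesNear r f p) :
    IncreasesNear r (OrderDual.toDual ∘ f) p :=
  fun h => hf <| (tendsto_prod_swap.eventually h).mono fun _ hz hz' =>
    hz ⟨symm_of r hz'.1, hz'.2⟩

theorem ContraOriented.symm [Std.Symm r] (h : ContraOriented r f g p) :
    ContraOriented r g f p :=
  (CoOriented.toDual h).symm

/-- Near `p`, each of `f` and `g` determines the other's direction of increase along the leaves,
up to a global sign. -/
def Comparable (r : X → X → Prop) (f : X → A) (g : X → B) (p : X) : Prop :=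
  CoOriented r f g p ∨ ContraOriented r f g p

namespace Comparable

theorem symm [Std.Symm r] (h : Comparable r f g p) : Comparable r g f p :=
  h.imp CoOriented.symm ContraOriented.symm

theorem comap {s : Y → Y → Prop} {φ : Y → X} {y : Y} (h : Comparable r f g (φ y))
    (hφ : ContinuousAt φ y) (hs : ∀ᶠ z in 𝓝 y ×ˢ 𝓝 y, s z.1 z.2 → r (φ z.1) (φ z.2)) :
    Comparable s (f ∘ φ) (g ∘ φ) y :=
  h.imp (CoOriented.comap · hφ hs) (CoOriented.comap · hφ hs)

theorem increasesNear [Std.Symm r] (h : Comparable r f g p) (hf : IncreasesNear r f p) :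
    IncreasesNear r g p :=
  h.elim (·.increasesNear hf) fun h => (CoOriented.increasesNear h hf).toDual

theorem coOriented_iff [Std.Symm r] (hfg : Comparable r f g p) (hgk : Comparable r g k p)
    (hf : IncreasesNear r f p) :
    CoOriented r f k p ↔ (CoOriented r f g p ↔ CoOriented r g k p) := by
  have hg := hfg.increasesNear hf
  rcases hfg with hfg | hfg <;> rcases hgk with hgk | hgk
  · exact iff_of_true (hfg.trans hgk) (iff_of_true hfg hgk)
  · exact iff_of_false (fun h => (hfg.symm.trans h).not_contraOriented hg hgk)
      fun h => (h.1 hfg).not_contraOriented hg hgk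
  · exact iff_of_false (fun h => (h.trans hgk.symm).not_contraOriented hf hfg)
      fun h => (h.2 hgk).not_contraOriented hf hfg
  · exact iff_of_true (CoOriented.trans hfg (CoOriented.toDual hgk))
      (iff_of_false (fun h => h.not_contraOriented hf hfg) fun h => h.not_contraOriented hg hgk)

theorem eventually_coOriented_iff (h : Comparable r f g p)
    (hf : ∀ᶠ q in 𝓝 p, IncreasesNear r f q) :
    ∀ᶠ q in 𝓝 p, (CoOriented r f g q ↔ CoOriented r f g p) := by
  rcases h with h | h
  · exact h.eventually.mono fun q hq => iff_of_true hq h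
  · filter_upwards [hf, CoOriented.eventually h] with q hfq hq
    exact iff_of_false (·.not_contraOriented hfq hq) (·.not_contraOriented hf.self_of_nhds h)

theorem coOriented_comap_iff {s : Y → Y → Prop} {φ : Y → X} {y : Y} (h : Comparable r f g (φ y))
    (hφ : ContinuousAt φ y) (hs : ∀ᶠ z in 𝓝 y ×ˢ 𝓝 y, s z.1 z.2 → r (φ z.1) (φ z.2))
    (hf : IncreasesNear s (f ∘ φ) y) :
    CoOriented s (f ∘ φ) (g ∘ φ) y ↔ CoOriented r f g (φ y) := by
  refine ⟨fun h' => h.resolve_right fun hcontra => ?_, (CoOriented.comap · hφ hs)⟩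
  exact h'.not_contraOriented hf (CoOriented.comap hcontra hφ hs)

end Comparable

end Orientation

/-! ### Sign cocycles -/

/-- A cocycle with values in `ℤ/2` on an open cover of `X`: `agree i j p` says that the
transition sign between the indices `i` and `j` at the point `p` of `U i ∩ U j` is trivial. The
relation is unconstrained outside `U i ∩ U j`. -/
structure SignCocycle (X ι : Type*) [TopologicalSpace X] where
  /-- the sets of the cover -/
  U : ι → Set X
  isOpen : ∀ i, IsOpen (U i)
  covers : ∀ p, ∃ i, p ∈ U i
  /-- triviality of the transition sign -/
  agree : ι → ι → X → Prop
  agree_iff : ∀ {i j k p}, p ∈ U i → p ∈ U j → p ∈ U k →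
    (agree i k p ↔ (agree i j p ↔ agree j k p))
  eventually_agree_iff : ∀ {i j p}, p ∈ U i → p ∈ U j →
    ∀ᶠ q in 𝓝 p, (agree i j q ↔ agree i j p)

namespace SignCocycle

variable {X Y ι : Type*} [TopologicalSpace X] [TopologicalSpace Y] (C : SignCocycle X ι)
  {o o' : ι → X → Prop} {p q : X} {i : ι}

/-- The family `o` of truth values (signs) is a section at `p` of the double cover defined by the
cocycle: each `o i` is continuous at `p`, and the `o i` are related by the transition signs. -/
structure IsSectionAt (o : ι → X → Prop) (p : X) : Prop where
  eventually_iff : ∀ {i}, p ∈ C.U i → ∀ᶠ q in 𝓝 p, (o i q ↔ o i p)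
  iff_agree : ∀ {i j}, p ∈ C.U i → p ∈ C.U j → (o i p ↔ (C.agree i j p ↔ o j p))

/-- Two families of signs coincide at `p`. -/
def EqAt (o o' : ι → X → Prop) (p : X) : Prop :=
  ∀ ⦃i⦄, p ∈ C.U i → (o i p ↔ o' i p)

/-- The pullback of a sign cocycle along a continuous map. -/
def comap {φ : Y → X} (hφ : Continuous φ) : SignCocycle Y ι where
  U i := φ ⁻¹' C.U i
  isOpen i := (C.isOpen i).preimage hφ
  covers y := C.covers (φ y)
  agree i j := C.agree i j ∘ φ
  agree_iff := C.agree_iff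
  eventually_agree_iff hi hj := hφ.continuousAt.eventually (C.eventually_agree_iff hi hj)

variable {C}

theorem agree_self (hp : p ∈ C.U i) : C.agree i i p :=
  ((C.agree_iff hp hp hp).trans (iff_true_intro Iff.rfl)).2 trivial

theorem EqAt.trans {o'' : ι → X → Prop} (h : C.EqAt o o' p) (h' : C.EqAt o' o'' p) :
    C.EqAt o o'' p :=
  fun _ hi => (h hi).trans (h' hi)

theorem EqAt.symm (h : C.EqAt o o' p) : C.EqAt o' o p := fun _ hi => (h hi).symm

namespace IsSectionAt

theorem congr (h : C.IsSectionAt o p) (hoo' : ∀ᶠ q in 𝓝 p, C.EqAt o o' q) :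
    C.IsSectionAt o' p where
  eventually_iff {i} hi := by
    filter_upwards [h.eventually_iff hi, hoo', (C.isOpen i).mem_nhds hi] with q hq hqo hqi
    rw [← hqo hqi, hq, hoo'.self_of_nhds hi]
  iff_agree hi hj := by
    rw [← hoo'.self_of_nhds hi, ← hoo'.self_of_nhds hj, h.iff_agree hi hj]

theorem eqAt_iff (h : C.IsSectionAt o p) (h' : C.IsSectionAt o' p) (hi : p ∈ C.U i) :
    C.EqAt o o' p ↔ (o i p ↔ o' i p) :=
  ⟨fun heq => heq hi, fun heq j hj => by rw [h.iff_agree hj hi, h'.iff_agree hj hi, heq]⟩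

theorem comap (h : C.IsSectionAt o p) {φ : Y → X} (hφ : Continuous φ) {y : Y} (hy : φ y = p) :
    (C.comap hφ).IsSectionAt (fun i => o i ∘ φ) y := by
  subst hy
  exact ⟨fun hi => hφ.continuousAt.eventually (h.eventually_iff hi), h.iff_agree⟩

end IsSectionAt

theorem eqAt_iff_eqAt_of_isPreconnected {A : Set X} (hA : IsPreconnected A)
    (h : ∀ p ∈ A, C.IsSectionAt o p) (h' : ∀ p ∈ A, C.IsSectionAt o' p) (hp : p ∈ A)
    (hq : q ∈ A) : C.EqAt o o' p ↔ C.EqAt o o' q := by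
  refine (eq_of_isPreconnected_of_eventually_eq hA (fun x hx => ?_) hp hq).to_iff
  obtain ⟨i, hi⟩ := C.covers x
  filter_upwards [self_mem_nhdsWithin, nhdsWithin_le_nhds ((C.isOpen i).mem_nhds hi),
    nhdsWithin_le_nhds ((h x hx).eventually_iff hi),
    nhdsWithin_le_nhds ((h' x hx).eventually_iff hi)] with y hy hyi hoy hoy'
  rw [(h y hy).eqAt_iff (h' y hy) hyi, (h x hx).eqAt_iff (h' x hx) hi, hoy, hoy']

/-- The section over `U i` whose `i`-th sign is `ε`. -/
def localSection (C : SignCocycle X ι) (i : ι) (ε : X → Prop) : ι → X → Prop :=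
  fun j p => C.agree j i p ↔ ε p

theorem isSectionAt_localSection {ε : X → Prop} (hi : p ∈ C.U i)
    (hε : ∀ᶠ q in 𝓝 p, (ε q ↔ ε p)) : C.IsSectionAt (C.localSection i ε) p where
  eventually_iff hj := by
    filter_upwards [hε, C.eventually_agree_iff hj hi] with q hq hqj
    rw [localSection, localSection, hq, hqj]
  iff_agree {j k} hj hk := by
    have hjk := C.agree_iff hj hk hi
    simp only [localSection]
    tauto

open Classical in
theorem exists_glue {V W : Set X} (hV : IsOpen V) (hW : IsOpen W)
    (ho : ∀ p ∈ V, C.IsSectionAt o p) (ho' : ∀ p ∈ W, C.IsSectionAt o' p)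
    (h : ∀ p ∈ V ∩ W, C.EqAt o o' p) :
    ∃ o'', (∀ p ∈ V ∪ W, C.IsSectionAt o'' p) ∧ ∀ p ∈ V, C.EqAt o'' o p := by
  let o'' : ι → X → Prop := fun i p => if p ∈ V then o i p else o' i p
  have hV'' : ∀ p ∈ V, C.EqAt o o'' p := fun p hp i _ => (iff_of_eq (if_pos hp)).symm
  have hW'' : ∀ p ∈ W, C.EqAt o' o'' p := fun p hp => by
    by_cases hpV : p ∈ V
    · exact (h p ⟨hpV, hp⟩).symm.trans (hV'' p hpV)
    · exact fun i _ => (iff_of_eq (if_neg hpV)).symm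
  refine ⟨o'', ?_, fun p hp => (hV'' p hp).symm⟩
  rintro p (hp | hp)
  · exact (ho p hp).congr (mem_of_superset (hV.mem_nhds hp) hV'')
  · exact (ho' p hp).congr (mem_of_superset (hW.mem_nhds hp) hW'')

/-- The section `o` over `M × (β, ∞)` extends to a section over `G × (a, ∞)`. -/
def ExtendsTo {M R : Type*} [TopologicalSpace M] [TopologicalSpace R] [Preorder R]
    (C : SignCocycle (M × R) ι) (o : ι → M × R → Prop) (β a : R) (G : Set M) : Prop :=
  ∃ o', (∀ p ∈ G ×ˢ Ioi a, C.IsSectionAt o' p) ∧ ∀ p ∈ G ×ˢ Ioi β, C.EqAt o' o p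

theorem ExtendsTo.mono {M R : Type*} [TopologicalSpace M] [TopologicalSpace R] [Preorder R]
    {C : SignCocycle (M × R) ι} {o : ι → M × R → Prop} {β a : R} {G G' : Set M}
    (h : C.ExtendsTo o β a G) (hG : G' ⊆ G) : C.ExtendsTo o β a G' :=
  let ⟨o', ho', heq⟩ := h
  ⟨o', fun p hp => ho' p ⟨hG hp.1, hp.2⟩, fun p hp => heq p ⟨hG hp.1, hp.2⟩⟩

section Extension

variable {M R : Type*} [TopologicalSpace M] [TopologicalSpace R]
  [ConditionallyCompleteLinearOrder R] [DenselyOrdered R] [OrderTopology R]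
  {C : SignCocycle (M × R) ι} {o o' : ι → M × R → Prop} {x : M} {β : R}

theorem eqAt_iff_eqAt_of_fibre {J : Set R} [OrdConnected J]
    (h : ∀ t ∈ J, C.IsSectionAt o (x, t)) (h' : ∀ t ∈ J, C.IsSectionAt o' (x, t)) {t t' : R}
    (ht : t ∈ J) (ht' : t' ∈ J) : C.EqAt o o' (x, t) ↔ C.EqAt o o' (x, t') :=
  eqAt_iff_eqAt_of_isPreconnected
    ((OrdConnected.isPreconnected ‹_›).image (Prod.mk x) (by fun_prop))
    (forall_mem_image.2 h) (forall_mem_image.2 h') (mem_image_of_mem _ ht) (mem_image_of_mem _ ht')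

theorem ExtendsTo.extend {a b s : R} {G : Set M} (h : C.ExtendsTo o β s G) (hG : IsOpen G)
    (hsβ : s ≤ β) {i : ι} (hi : G ×ˢ Ioo a b ⊆ C.U i) (has : a < s) (hsb : s < b) :
    C.ExtendsTo o β a G := by
  obtain ⟨o', ho', heq⟩ := h
  obtain ⟨c, hsc, hcb⟩ := exists_between hsb
  have hsub : Ioo s b ⊆ Ioo a b := Ioo_subset_Ioo_left has.le
  let oi := C.localSection i fun p => o' i (p.1, c)
  have hoi : ∀ p ∈ G ×ˢ Ioo a b, C.IsSectionAt oi p := fun p hp =>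
    isSectionAt_localSection (hi hp) <|
      ((Continuous.prodMk_left c).comp continuous_fst).continuousAt.eventually
        ((ho' (p.1, c) ⟨hp.1, hsc⟩).eventually_iff (hi ⟨hp.1, has.trans hsc, hcb⟩))
  have hglue : ∀ p ∈ (G ×ˢ Ioi s) ∩ (G ×ˢ Ioo a b), C.EqAt o' oi p := by
    rintro ⟨x, t⟩ ⟨⟨hx, hst⟩, -, -, htb⟩
    have hic : (x, c) ∈ C.U i := hi ⟨hx, has.trans hsc, hcb⟩
    refine (eqAt_iff_eqAt_of_fibre (J := Ioo s b) (fun t ht => ho' _ ⟨hx, ht.1⟩)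
      (fun t ht => hoi _ ⟨hx, hsub ht⟩) ⟨hsc, hcb⟩ ⟨hst, htb⟩).1 ?_
    refine ((ho' (x, c) ⟨hx, hsc⟩).eqAt_iff (hoi (x, c) ⟨hx, hsub ⟨hsc, hcb⟩⟩) hic).2 ?_
    exact (iff_true_left (agree_self hic)).symm
  obtain ⟨o'', ho'', heq'⟩ :=
    exists_glue (hG.prod isOpen_Ioi) (hG.prod isOpen_Ioo) ho' hoi hglue
  refine ⟨o'', fun p hp => ho'' p ?_, fun p hp =>
    (heq' p ⟨hp.1, hsβ.trans_lt hp.2⟩).trans (heq p hp)⟩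
  exact (lt_or_ge s p.2).imp (⟨hp.1, ·⟩) (⟨hp.1, hp.2, ·.trans_lt hsb⟩)

theorem exists_extendsTo [NoMinOrder R] [NoMaxOrder R]
    (ho : ∀ p : M × R, β < p.2 → C.IsSectionAt o p) (x : M) (c : R) :
    ∃ a < c, ∃ G ∈ 𝓝 x, C.ExtendsTo o β a G := by
  let S : Set R := {a | a ≤ β ∧ ∃ G ∈ 𝓝 x, C.ExtendsTo o β a G}
  have hS : S.Nonempty :=
    ⟨β, le_rfl, univ, univ_mem, o, fun p hp => ho p hp.2, fun _ _ _ _ => Iff.rfl⟩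
  by_contra! hcon
  have hbdd : BddBelow S := ⟨c, fun a ha => le_of_not_gt fun hac =>
    let ⟨G, hG, hext⟩ := ha.2
    hcon a hac G hG hext⟩
  obtain ⟨i, hi⟩ := C.covers (x, sInf S)
  obtain ⟨G, hG, J, hJ, hGJ⟩ := mem_nhds_prod_iff.1 ((C.isOpen i).mem_nhds hi)
  obtain ⟨a, b, hab, habJ⟩ := mem_nhds_iff_exists_Ioo_subset.1 hJ
  obtain ⟨s, hsS, hsb⟩ := exists_lt_of_csInf_lt hS hab.2
  have has : a < s := hab.1.trans_le (csInf_le hbdd hsS)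
  obtain ⟨hsβ, G', hG', hext⟩ := hsS
  have hsub : interior (G ∩ G') ⊆ G ∩ G' := interior_subset
  have hext' : C.ExtendsTo o β a (interior (G ∩ G')) :=
    (hext.mono fun x hx => (hsub hx).2).extend isOpen_interior hsβ
      (fun p hp => hGJ ⟨(hsub hp.1).1, habJ hp.2⟩) has hsb
  have haS : a ∈ S := ⟨has.le.trans hsβ, _, interior_mem_nhds.2 (inter_mem hG hG'), hext'⟩
  exact (csInf_le hbdd haS).not_gt hab.1

theorem exists_section_extending [NoMinOrder R] [NoMaxOrder R]
    (ho : ∀ p : M × R, β < p.2 → C.IsSectionAt o p) :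
    ∃ o', (∀ p, C.IsSectionAt o' p) ∧ ∀ p : M × R, β < p.2 → C.EqAt o' o p := by
  choose a ha G hG s hs hsβ using fun p : M × R => exists_extendsTo ho p.1 p.2
  have hcompat : ∀ p q : M × R, q ∈ G p ×ˢ Ioi (a p) → C.EqAt (s p) (s q) q := by
    rintro p ⟨x, t⟩ ⟨hx, ht⟩
    have hx' : x ∈ G (x, t) := mem_of_mem_nhds (hG (x, t))
    obtain ⟨b, hb⟩ := exists_gt (max t β)
    rw [max_lt_iff] at hb
    have hmax : ∀ u ≥ t, a p < u ∧ a (x, t) < u := fun u hu =>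
      ⟨(ht : a p < t).trans_le hu, (ha (x, t)).trans_le hu⟩
    refine (eqAt_iff_eqAt_of_fibre (J := Ici t) (fun u hu => hs p _ ⟨hx, (hmax u hu).1⟩)
      (fun u hu => hs (x, t) _ ⟨hx', (hmax u hu).2⟩) hb.1.le self_mem_Ici).1 ?_
    exact (hsβ p (x, b) ⟨hx, hb.2⟩).trans (hsβ (x, t) (x, b) ⟨hx', hb.2⟩).symm
  have hmem : ∀ p : M × R, G p ×ˢ Ioi (a p) ∈ 𝓝 p := fun p =>
    prod_mem_nhds (hG p) (Ioi_mem_nhds (ha p))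
  refine ⟨fun i p => s p i p, fun p => (hs p p (mem_of_mem_nhds (hmem p))).congr ?_,
    fun p hp => hsβ p p ⟨mem_of_mem_nhds (hG p), hp⟩⟩
  exact mem_of_superset (hmem p) fun q hq => hcompat p q hq

end Extension
end SignCocycle

/-! ### One-dimensional foliations -/

theorem continuousAt_comp_of_eq_imp_eq {T X Y Z : Type*} [TopologicalSpace T] [TopologicalSpace X]
    [TopologicalSpace Y] [TopologicalSpace Z] {a : X → Z} {b : X → Y} {q : T → X} {t : T}
    {S : Set X} (hS : IsOpen S) (hq : ∀ᶠ t' in 𝓝 t, q t' ∈ S)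
    (hb : 𝓝 (b (q t)) ≤ map b (𝓝 (q t))) (ha : ContinuousAt a (q t))
    (hab : ∀ p ∈ S, ∀ p' ∈ S, b p = b p' → a p = a p') (hbq : ContinuousAt (b ∘ q) t) :
    ContinuousAt (a ∘ q) t := by
  intro N hN
  have himage : b '' (S ∩ a ⁻¹' N) ∈ 𝓝 (b (q t)) :=
    hb (image_mem_map (inter_mem (hS.mem_nhds hq.self_of_nhds) (ha hN)))
  refine mem_map.2 ?_
  filter_upwards [hbq himage, hq] with t' ⟨p, ⟨hpS, hpN⟩, hp⟩ hq'
  exact (congrArg (· ∈ N) (hab p hpS _ hq' hp)).mp hpN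

theorem strictMonoOn_slices_or_strictAntiOn_slices {R E A : Type*}
    [ConditionallyCompleteLinearOrder R] [DenselyOrdered R] [TopologicalSpace R] [OrderTopology R]
    [TopologicalSpace E] [LinearOrder A] [TopologicalSpace A] [OrderClosedTopology A]
    {f : R × E → A} {I : Set R} [OrdConnected I] {B : Set E} (hB : IsPreconnected B)
    (hf : ContinuousOn f (I ×ˢ B)) (hinj : ∀ y ∈ B, InjOn (fun u => f (u, y)) I) :
    (∀ y ∈ B, StrictMonoOn (fun u => f (u, y)) I) ∨
      ∀ y ∈ B, StrictAntiOn (fun u => f (u, y)) I := by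
  obtain hI | hI := I.subsingleton_or_nontrivial
  · exact .inl fun y _ => hI.strictMonoOn _
  obtain ⟨a, ha, b, hb, hab⟩ := hI.exists_lt
  have hslice : ∀ u ∈ I, ContinuousOn (fun y => f (u, y)) B := fun u hu =>
    hf.comp (by fun_prop) fun y hy => ⟨hu, hy⟩
  have hside : ∀ y ∈ B, ∀ z ∈ B, (f (a, y) < f (b, y)) = (f (a, z) < f (b, z)) := by
    refine fun y hy z hz => eq_of_isPreconnected_of_eventually_eq
      (f := fun y => f (a, y) < f (b, y)) hB (fun x hx => ?_) hy hz
    have hta := hslice a ha x hx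
    have htb := hslice b hb x hx
    rcases (hinj x hx |>.ne ha hb hab.ne).lt_or_gt with hlt | hlt
    · exact (hta.eventually_lt htb hlt).mono fun z hz => propext (iff_of_true hlt hz)
    · exact (htb.eventually_lt hta hlt).mono fun z hz =>
        propext (iff_of_false hlt.not_gt hz.not_gt)
  have hmono : ∀ y ∈ B, StrictMonoOn (fun u => f (u, y)) I ∨ StrictAntiOn (fun u => f (u, y)) I :=
    fun y hy => strictMonoOn_or_strictAntiOn_of_ordConnected
      (hf.comp (by fun_prop) fun u hu => ⟨hu, hy⟩) (hinj y hy)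
  by_cases hlt : ∃ y ∈ B, f (a, y) < f (b, y)
  · obtain ⟨y, hy, hlt⟩ := hlt
    exact .inl fun z hz => (hmono z hz).resolve_right fun h =>
      (h ha hb hab).not_gt (hside y hy z hz ▸ hlt)
  · push Not at hlt
    exact .inr fun z hz => (hmono z hz).resolve_left fun h => (hlt z hz).not_gt (h ha hb hab)

namespace Foliation

section Charts

variable {X : Type u} [TopologicalSpace X] {m : ℕ} (F : Foliation X 1 m) (i : F.ι)

/-- The chart `φᵢ` of a one-dimensional foliation, with `ℝ¹` identified with `ℝ`. -/
def lineChart : F.U i ≃ₜ ℝ × (Fin m → ℝ) :=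
  (F.chart i).trans ((Homeomorph.funUnique (Fin 1) ℝ).prodCongr (.refl _))

theorem isOpenEmbedding_lineChart_symm :
    IsOpenEmbedding fun z => ((F.lineChart i).symm z : X) :=
  (F.isOpen i).isOpenEmbedding_subtypeVal.comp (F.lineChart i).symm.isOpenEmbedding

/-- The chart `φᵢ` of a one-dimensional foliation as a partial homeomorphism. -/
def box : OpenPartialHomeomorph X (ℝ × (Fin m → ℝ)) :=
  ((F.isOpenEmbedding_lineChart_symm i).toOpenPartialHomeomorph _).symm

/-- The leaf coordinate of a chart; its value is junk outside `U i`. -/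
def height (x : X) : ℝ := (F.box i x).1

/-- The transverse coordinates of a chart; their value is junk outside `U i`. -/
def transverse (x : X) : Fin m → ℝ := (F.box i x).2

/-- The parametrisation by the leaf coordinate of the plaque with transverse coordinates `y`. -/
def plaqueMap (y : Fin m → ℝ) (u : ℝ) : X := (F.box i).symm (u, y)

theorem box_source : (F.box i).source = F.U i := by
  refine Subset.antisymm ?_ fun x hx => ⟨F.lineChart i ⟨x, hx⟩, mem_univ _, ?_⟩
  · rintro _ ⟨z, -, rfl⟩
    exact Subtype.coe_prop _
  · exact congrArg Subtype.val ((F.lineChart i).symm_apply_apply ⟨x, hx⟩)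

variable {i} {F} {x x' : X} {y : Fin m → ℝ} {u : ℝ} {j : F.ι}

theorem plaqueMap_mem : F.plaqueMap i y u ∈ F.U i :=
  F.box_source i ▸ (F.box i).map_target (mem_univ _)

theorem box_plaqueMap : F.box i (F.plaqueMap i y u) = (u, y) := (F.box i).right_inv (mem_univ _)

theorem height_plaqueMap : F.height i (F.plaqueMap i y u) = u := congrArg Prod.fst box_plaqueMap

theorem transverse_plaqueMap : F.transverse i (F.plaqueMap i y u) = y :=
  congrArg Prod.snd box_plaqueMap

theorem plaqueMap_height (hx : x ∈ F.U i) :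
    F.plaqueMap i (F.transverse i x) (F.height i x) = x :=
  (F.box i).left_inv (F.box_source i ▸ hx)

theorem continuousOn_box : ContinuousOn (F.box i) (F.U i) :=
  F.box_source i ▸ (F.box i).continuousOn

theorem continuousOn_height : ContinuousOn (F.height i) (F.U i) :=
  continuous_fst.comp_continuousOn continuousOn_box

theorem continuousOn_transverse : ContinuousOn (F.transverse i) (F.U i) :=
  continuous_snd.comp_continuousOn continuousOn_box

theorem continuous_box_symm : Continuous (F.box i).symm :=
  (F.isOpenEmbedding_lineChart_symm i).continuous

theorem continuous_plaqueMap (F : Foliation X 1 m) (i : F.ι) (y : Fin m → ℝ) :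
    Continuous (F.plaqueMap i y) :=
  continuous_box_symm.comp (.prodMk_left y)

theorem eq_of_height_eq (hx : x ∈ F.U i) (hx' : x' ∈ F.U i)
    (hh : F.height i x = F.height i x') (ht : F.transverse i x = F.transverse i x') : x = x' := by
  rw [← plaqueMap_height hx, ← plaqueMap_height hx', hh, ht]

theorem transverse_eq_chart (hx : x ∈ F.U i) : F.transverse i x = (F.chart i ⟨x, hx⟩).2 := by
  have hsymm : (F.lineChart i).symm (F.box i x) = ⟨x, hx⟩ := Subtype.ext (plaqueMap_height hx)
  exact congrArg Prod.snd ((F.lineChart i).symm_apply_eq.1 hsymm)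

theorem mem_plaqueFibre : x ∈ F.plaqueFibre i y ↔ x ∈ F.U i ∧ F.transverse i x = y :=
  ⟨fun ⟨hx, h⟩ => ⟨hx, (transverse_eq_chart hx).trans h⟩,
    fun ⟨hx, h⟩ => ⟨hx, (transverse_eq_chart hx).symm.trans h⟩⟩

theorem range_plaqueMap : range (F.plaqueMap i y) = F.plaqueFibre i y := by
  refine Subset.antisymm (range_subset_iff.2 fun u =>
    mem_plaqueFibre.2 ⟨plaqueMap_mem, transverse_plaqueMap⟩) fun x hx => ?_
  obtain ⟨hxi, rfl⟩ := mem_plaqueFibre.1 hx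
  exact ⟨_, plaqueMap_height hxi⟩

theorem isPlaque_iff {P : Set X} : F.IsPlaque P ↔ ∃ i y, P = F.plaqueFibre i y := by
  have hconn (i y) : IsPreconnected (F.plaqueFibre i y) := by
    rw [← range_plaqueMap]
    exact isPreconnected_range (F.continuous_plaqueMap i y)
  constructor
  · rintro ⟨i, y, z, hz, rfl⟩
    exact ⟨i, y, (hconn i y).connectedComponentIn hz⟩
  · rintro ⟨i, y, rfl⟩
    have hz : F.plaqueMap i y 0 ∈ F.plaqueFibre i y :=
      mem_plaqueFibre.2 ⟨plaqueMap_mem, transverse_plaqueMap⟩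
    exact ⟨i, y, _, hz, ((hconn i y).connectedComponentIn hz).symm⟩

theorem samePlaque_iff (hx : x ∈ F.U i) (hx' : x' ∈ F.U i) :
    F.samePlaque x x' ↔ F.transverse i x = F.transverse i x' := by
  constructor
  · rintro ⟨P, hP, hxP, hxP'⟩
    obtain ⟨j, y, rfl⟩ := isPlaque_iff.1 hP
    obtain ⟨hxj, h⟩ := hxP
    obtain ⟨hxj', h'⟩ := hxP'
    rw [transverse_eq_chart hx, transverse_eq_chart hx']
    exact F.compat j i x x' hxj hx hxj' hx' (h.trans h'.symm)
  · exact fun h => ⟨_, isPlaque_iff.2 ⟨i, _, rfl⟩, mem_plaqueFibre.2 ⟨hx, h⟩,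
      mem_plaqueFibre.2 ⟨hx', rfl⟩⟩

theorem transverse_eq_iff (hx : x ∈ F.U i) (hx' : x' ∈ F.U i) (hxj : x ∈ F.U j)
    (hxj' : x' ∈ F.U j) :
    F.transverse i x = F.transverse i x' ↔ F.transverse j x = F.transverse j x' := by
  rw [← samePlaque_iff hx hx', samePlaque_iff hxj hxj']

instance : Std.Symm F.samePlaque := ⟨fun _ _ ⟨P, hP, hx, hy⟩ => ⟨P, hP, hy, hx⟩⟩

theorem firstCountableTopology (F : Foliation X 1 m) : FirstCountableTopology X := by
  refine ⟨fun x => ?_⟩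
  obtain ⟨i, hi⟩ := F.covers x
  rw [← (F.box i).symm_map_nhds_eq (F.box_source i ▸ hi)]
  infer_instance

theorem increasesNear_height (hx : x ∈ F.U i) : IncreasesNear F.samePlaque (F.height i) x := by
  have htend : Tendsto (fun u => (x, F.plaqueMap i (F.transverse i x) u)) (𝓝 (F.height i x))
      (𝓝 x ×ˢ 𝓝 x) :=
    tendsto_const_nhds.prodMk ((F.continuous_plaqueMap i _).tendsto' _ _ (plaqueMap_height hx))
  refine htend.frequently ((frequently_gt_nhds _).mono fun u hu => ?_)
  exact ⟨(samePlaque_iff hx plaqueMap_mem).2 transverse_plaqueMap.symm,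
    hu.trans_eq height_plaqueMap.symm⟩

theorem eventually_exists_plaqueMap_eq {N : Set (ℝ × (Fin m → ℝ))} (hx : x ∈ F.U i)
    (hN : N ∈ 𝓝 (F.box i x)) : ∀ᶠ z in 𝓝 x ×ˢ 𝓝 x, F.samePlaque z.1 z.2 →
      ∃ y u u', (u, y) ∈ N ∧ (u', y) ∈ N ∧ z = (F.plaqueMap i y u, F.plaqueMap i y u') := by
  have hU : F.U i ∩ F.box i ⁻¹' N ∈ 𝓝 x := inter_mem ((F.isOpen i).mem_nhds hx) <|
    (continuousOn_box.continuousAt ((F.isOpen i).mem_nhds hx)).preimage_mem_nhds hN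
  filter_upwards [prod_mem_prod hU hU] with ⟨q, q'⟩ ⟨⟨hq, hqN⟩, hq', hqN'⟩ hr
  have ht : F.transverse i q = F.transverse i q' := (samePlaque_iff hq hq').1 hr
  refine ⟨F.transverse i q, F.height i q, F.height i q', hqN, ht ▸ hqN', ?_⟩
  rw [plaqueMap_height hq, ht, plaqueMap_height hq']

theorem comparable_height {A : Type*} [LinearOrder A] [TopologicalSpace A] [OrderClosedTopology A]
    {f : X → A} {W : Set X} (hx : x ∈ F.U i) (hW : W ∈ 𝓝 x) (hf : ContinuousOn f W)
    (hinj : ∀ y, ∀ I : Set ℝ, IsPreconnected I → MapsTo (F.plaqueMap i y) I W →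
      InjOn (f ∘ F.plaqueMap i y) I) :
    Comparable F.samePlaque (F.height i) f x := by
  have hW' : (F.box i).symm ⁻¹' W ∈ 𝓝 (F.height i x, F.transverse i x) :=
    (continuous_box_symm.tendsto' _ _ (plaqueMap_height hx)) hW
  obtain ⟨J, hJ, V, hV, hJV⟩ := mem_nhds_prod_iff.1 hW'
  obtain ⟨a, b, hab, habJ⟩ := mem_nhds_iff_exists_Ioo_subset.1 hJ
  obtain ⟨ε, hε, hεV⟩ := Metric.mem_nhds_iff.1 hV
  have hsub : Ioo a b ×ˢ Metric.ball (F.transverse i x) ε ⊆ (F.box i).symm ⁻¹' W :=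
    (prod_mono habJ hεV).trans hJV
  have hslices := strictMonoOn_slices_or_strictAntiOn_slices (f := f ∘ (F.box i).symm)
    (convex_ball _ ε).isPreconnected (hf.comp continuous_box_symm.continuousOn hsub)
    fun y hy => hinj y _ isPreconnected_Ioo fun u hu => hsub ⟨hu, hy⟩
  have hsegments := eventually_exists_plaqueMap_eq hx <|
    prod_mem_nhds (Ioo_mem_nhds hab.1 hab.2) (Metric.ball_mem_nhds _ hε)
  refine hslices.imp (fun h => hsegments.mono fun z hz hr => ?_)
    fun h => hsegments.mono fun z hz hr => ?_
  all_goals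
    obtain ⟨y, u, u', hu, hu', rfl⟩ := hz hr
    rw [height_plaqueMap, height_plaqueMap]
  · exact ((h y hu.2).lt_iff_lt hu.1 hu'.1).symm
  · exact ((h y hu.2).lt_iff_gt hu'.1 hu.1).symm

theorem comparable_height_height (hi : x ∈ F.U i) (hj : x ∈ F.U j) :
    Comparable F.samePlaque (F.height i) (F.height j) x := by
  refine comparable_height hi ((F.isOpen j).mem_nhds hj) continuousOn_height
    fun y I _ hI u hu u' hu' huu' => ?_
  have htrans : F.transverse j (F.plaqueMap i y u) = F.transverse j (F.plaqueMap i y u') :=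
    (transverse_eq_iff plaqueMap_mem plaqueMap_mem (hI hu) (hI hu')).1 <|
      transverse_plaqueMap.trans transverse_plaqueMap.symm
  have heq := eq_of_height_eq (hI hu) (hI hu') huu' htrans
  rw [← height_plaqueMap (F := F) (i := i) (y := y) (u := u), heq, height_plaqueMap]

/-- The orientation double cover of the foliation: its sections are the orientations of the leaves,
encoded in each chart by whether the leaf coordinate is increasing. -/
def orientationCocycle (F : Foliation X 1 m) : SignCocycle X F.ι where
  U := F.U
  isOpen := F.isOpen
  covers := F.covers
  agree i j := CoOriented F.samePlaque (F.height i) (F.height j)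
  agree_iff hi hj hk := (comparable_height_height hi hj).coOriented_iff
    (comparable_height_height hj hk) (increasesNear_height hi)
  eventually_agree_iff {i _ _} hi hj :=
    (comparable_height_height hi hj).eventually_coOriented_iff <|
      ((F.isOpen i).eventually_mem hi).mono fun _ => increasesNear_height

theorem isSectionAt_coOriented {A : Type*} [LinearOrder A] {f : X → A}
    (h : ∀ i, x ∈ F.U i → Comparable F.samePlaque (F.height i) f x) :
    F.orientationCocycle.IsSectionAt (fun i => CoOriented F.samePlaque (F.height i) f) x where
  eventually_iff {i} hi := (h i hi).eventually_coOriented_iff <|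
    ((F.isOpen i).eventually_mem hi).mono fun _ => increasesNear_height
  iff_agree hi hj :=
    (comparable_height_height hi hj).coOriented_iff (h _ hj) (increasesNear_height hi)

end Charts

section Holonomy

variable {X : Type*} [TopologicalSpace X] {m : ℕ} {F : Foliation X 1 m} {i j : F.ι} {x : X}
  {Q : Set X}

theorem nhds_transverse_le (hx : x ∈ F.U i) :
    𝓝 (F.transverse i x) ≤ map (F.transverse i) (𝓝 x) := by
  have hmap := (F.box i).map_nhds_eq (F.box_source i ▸ hx)
  rw [show F.transverse i = Prod.snd ∘ F.box i from rfl, ← map_map, hmap]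
  exact (map_snd_nhds _).ge

theorem samePlaque_iff_transverse_eq (hQi : Q ⊆ F.U i) (hQj : Q ⊆ F.U j) {q q' p p' : X}
    (hq : q ∈ Q) (hq' : q' ∈ Q) (hp : p ∈ F.U j) (hp' : p' ∈ F.U j) (h : F.samePlaque q p)
    (h' : F.samePlaque q' p') : F.samePlaque p p' ↔ F.transverse i q = F.transverse i q' := by
  rw [samePlaque_iff hp hp', ← (samePlaque_iff (hQj hq) hp).1 h,
    ← (samePlaque_iff (hQj hq') hp').1 h']
  exact transverse_eq_iff (hQj hq) (hQj hq') (hQi hq) (hQi hq')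

theorem continuousAt_transverse_of_samePlaque {T : Type*} [TopologicalSpace T] {q ψ : T → X} {t : T}
    (hQ : IsOpen Q) (hQi : Q ⊆ F.U i) (hQj : Q ⊆ F.U j) (hψ : ContinuousAt ψ t)
    (hψj : ψ t ∈ F.U j) (hq : ∀ᶠ t' in 𝓝 t, q t' ∈ Q ∧ F.samePlaque (q t') (ψ t')) :
    ContinuousAt (fun t' => F.transverse i (q t')) t := by
  obtain ⟨hqt, -⟩ := hq.self_of_nhds
  refine continuousAt_comp_of_eq_imp_eq (a := F.transverse i) (b := F.transverse j) hQ
    (hq.mono fun _ h => h.1) (nhds_transverse_le (hQj hqt))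
    (continuousOn_transverse.continuousAt ((F.isOpen i).mem_nhds (hQi hqt)))
    (fun p hp p' hp' => (transverse_eq_iff (hQj hp) (hQj hp') (hQi hp) (hQi hp')).1) ?_
  refine ((continuousOn_transverse.continuousAt ((F.isOpen j).mem_nhds hψj)).comp hψ).congr ?_
  filter_upwards [hψ ((F.isOpen j).mem_nhds hψj), hq] with t' hψt' ⟨hqt', h⟩
  exact ((samePlaque_iff (hQj hqt') hψt').1 h).symm

end Holonomy

/-! ### Foliations that are eventually vertical -/

theorem exists_frequently_prod_Ioc_subset {M R : Type*} [TopologicalSpace M]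
    [FirstCountableTopology M] [ConditionallyCompleteLinearOrder R] [NoMinOrder R] [NoMaxOrder R]
    [TopologicalSpace R] [OrderTopology R] [CountableInterFilter (atTop : Filter R)] {m : ℕ}
    (F : Foliation (M × R) 1 m) (x : M) (β : R) :
    ∃ γ ≥ β, ∃ G, IsOpen G ∧ x ∈ G ∧ ∃ᶠ s in atTop, ∃ i, G ×ˢ Ioc γ s ⊆ F.U i := by
  have hlocal : ∀ s : R, ∃ a < s, ∃ i, ∀ᶠ x' in 𝓝 x, ∀ t ∈ Ioc a s, (x', t) ∈ F.U i := by
    intro s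
    obtain ⟨i, hi⟩ := F.covers (x, s)
    obtain ⟨G, hG, J, hJ, hGJ⟩ := mem_nhds_prod_iff.1 ((F.isOpen i).mem_nhds hi)
    obtain ⟨a, ha, haJ⟩ := exists_Ioc_subset_of_mem_nhds hJ (exists_lt s)
    exact ⟨a, ha, i, mem_of_superset hG fun x' hx' t ht => hGJ ⟨hx', haJ ht⟩⟩
  choose a ha i hi using hlocal
  obtain ⟨γ, hγ⟩ := exists_frequently_le_of_forall_lt_self (β := β) fun s _ => ha s
  obtain ⟨G, hG, htall⟩ := exists_mem_frequently_forall (l := 𝓝 x)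
    (P := fun s x' => ∀ t ∈ Ioc γ s, (x', t) ∈ F.U (i s)) <| hγ.mono fun s hs =>
      (hi s).mono fun x' hx' t ht => hx' t ⟨hs.trans_lt ht.1, ht.2⟩
  refine ⟨max β γ, le_max_left _ _, interior G, isOpen_interior, mem_interior_iff_mem_nhds.2 hG, ?_⟩
  exact htall.mono fun s hs => ⟨i s, fun p hp => hs p.1 (interior_subset hp.1) p.2
    ⟨(le_max_right _ _).trans_lt hp.2.1, hp.2.2⟩⟩

section Vertical

variable {M R : Type*} [TopologicalSpace M] [TopologicalSpace R] {m : ℕ}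
  (F : Foliation (M × R) 1 m)

/-- The leaf through `p` contains a neighbourhood of `p` in the fibre `{p.1} × R`. -/
def VerticalAt (p : M × R) : Prop := ∀ᶠ s in 𝓝 p.2, F.samePlaque (p.1, s) p

/-- The points `x` such that the foliation is vertical on `{x} × (β, ∞)`. -/
def verticalAbove [LT R] (β : R) : Set M := {x | ∀ s > β, F.VerticalAt (x, s)}

variable {F} {i : F.ι} {p : M × R} {x : M}

theorem verticalAt_iff (hp : p ∈ F.U i) :
    F.VerticalAt p ↔ ∀ᶠ s in 𝓝 p.2, F.transverse i (p.1, s) = F.transverse i p := by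
  have hU : ∀ᶠ s in 𝓝 p.2, (p.1, s) ∈ F.U i :=
    (Continuous.prodMk_right p.1).continuousAt ((F.isOpen i).mem_nhds hp)
  exact eventually_congr (hU.mono fun s hs => samePlaque_iff hs hp)

variable [ConditionallyCompleteLinearOrder R] {β : R}

theorem verticalAbove_mono : Monotone F.verticalAbove :=
  fun _ _ hβ _ hx s hs => hx s (hβ.trans_lt hs)

theorem exists_mem_verticalAbove [OrderTopology R] [NoMaxOrder R]
    [CountableInterFilter (atTop : Filter R)] {Q : Set (M × R)} (hQ : IsOpen Q) {c : R}
    (hU : ∃ᶠ s in atTop, ∃ i, Q ⊆ F.U i ∧ ∀ t ∈ Ioc c s, (x, t) ∈ F.U i)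
    (hplaque : ∀ t > c, ∃ q ∈ Q, F.samePlaque q (x, t)) : ∃ τ, x ∈ F.verticalAbove τ := by
  have hchart : ∀ t > c, ∃ i, Q ⊆ F.U i ∧ ∀ᶠ t' in 𝓝 t, c < t' ∧ (x, t') ∈ F.U i := by
    intro t ht
    obtain ⟨s, ⟨i, hQi, hi⟩, hts⟩ := (hU.and_eventually (eventually_gt_atTop t)).exists
    exact ⟨i, hQi, mem_of_superset (Ioo_mem_nhds ht hts) fun t' ht' =>
      ⟨ht'.1, hi t' ⟨ht'.1, ht'.2.le⟩⟩⟩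
  have : Nonempty (M × R) := ⟨(x, c)⟩
  choose! q hqQ hq using hplaque
  obtain ⟨_, i₀, hQi₀, -⟩ := hU.exists
  -- `q` need not be continuous, but its transverse coordinate is; being defined on a long interval,
  -- the latter is eventually constant.
  have hcont : ContinuousOn (fun t => F.transverse i₀ (q t)) (Ioi c) := by
    refine continuousOn_of_forall_continuousAt fun t ht => ?_
    obtain ⟨i, hQi, hi⟩ := hchart t ht
    exact continuousAt_transverse_of_samePlaque hQ hQi₀ hQi
      (Continuous.prodMk_right x).continuousAt hi.self_of_nhds.2 <|
        hi.mono fun t' ht' => ⟨hqQ t' ht'.1, hq t' ht'.1⟩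
  obtain ⟨y, hy⟩ := eventuallyConst_iff_exists_eventuallyEq.1 <|
    eventuallyConst_of_continuousOn_Ioi hcont
  obtain ⟨τ, hτ⟩ := (hy.and (eventually_gt_atTop c)).exists_forall_of_atTop
  refine ⟨τ, fun t ht => ?_⟩
  obtain ⟨i, hQi, hi⟩ := hchart t (hτ t ht.le).2
  filter_upwards [hi, Ioi_mem_nhds ht] with t' ⟨hct', ht'⟩ hτt'
  have hct := (hτ t ht.le).2
  refine (samePlaque_iff_transverse_eq hQi₀ hQi (hqQ t' hct') (hqQ t hct) ht' hi.self_of_nhds.2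
    (hq t' hct') (hq t hct)).2 ?_
  exact (hτ t' (le_of_lt hτt')).1.trans (hτ t ht.le).1.symm

variable [DenselyOrdered R] [OrderTopology R]

theorem transverse_eq_of_verticalAt {J : Set R} [OrdConnected J] (hU : ∀ s ∈ J, (x, s) ∈ F.U i)
    (hJ : ∀ s ∈ J, F.VerticalAt (x, s)) {s s' : R} (hs : s ∈ J) (hs' : s' ∈ J) :
    F.transverse i (x, s) = F.transverse i (x, s') :=
  eq_of_isPreconnected_of_eventually_eq (f := fun s => F.transverse i (x, s))
    (OrdConnected.isPreconnected ‹_›)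
    (fun s hs => nhdsWithin_le_nhds <|
      ((verticalAt_iff (hU s hs)).1 (hJ s hs)).mono fun _ h => h.symm) hs hs'

theorem eventually_forall_exists_samePlaque {Q : Set (M × R)} {c s : R} (hcs : c ≤ s)
    (hQ : Q ∈ 𝓝 (x, c)) (hU : ∀ t ∈ Icc c s, (x, t) ∈ F.U i)
    (hv : ∀ t ∈ Icc c s, F.VerticalAt (x, t)) :
    ∀ᶠ x' in 𝓝 x, ∀ t ∈ Icc c s, ∃ q ∈ Q, F.samePlaque q (x', t) := by
  refine isCompact_Icc.eventually_forall_of_forall_eventually fun t ht => ?_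
  have hc : c ∈ Icc c s := left_mem_Icc.2 hcs
  have himage : F.transverse i '' (Q ∩ F.U i) ∈ 𝓝 (F.transverse i (x, t)) := by
    rw [← transverse_eq_of_verticalAt hU hv hc ht]
    exact nhds_transverse_le (hU c hc)
      (image_mem_map (inter_mem hQ ((F.isOpen i).mem_nhds (hU c hc))))
  have hUt := (F.isOpen i).mem_nhds (hU t ht)
  filter_upwards [continuousOn_transverse.continuousAt hUt himage, hUt]
    with p ⟨q, ⟨hqQ, hqU⟩, hq⟩ hp
  exact ⟨q, hqQ, (samePlaque_iff hqU hp).2 hq⟩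

variable [NoMinOrder R] [NoMaxOrder R]

theorem isClosed_verticalAbove : IsClosed (F.verticalAbove β) := by
  refine isClosed_of_closure_subset fun x hx s (hs : β < s) => ?_
  obtain ⟨i, hi⟩ := F.covers (x, s)
  obtain ⟨G, hG, J, hJ, hGJ⟩ := mem_nhds_prod_iff.1 ((F.isOpen i).mem_nhds hi)
  obtain ⟨a, b, hab, habJ⟩ := mem_nhds_iff_exists_Ioo_subset.1 (inter_mem hJ (Ioi_mem_nhds hs))
  have hcont : ∀ s' ∈ Ioo a b, ContinuousAt (fun x' => F.transverse i (x', s')) x := fun s' hs' =>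
    (continuousOn_transverse.continuousAt <| (F.isOpen i).mem_nhds <|
      hGJ ⟨mem_of_mem_nhds hG, (habJ hs').1⟩).comp (Continuous.prodMk_left s').continuousAt
  refine (verticalAt_iff hi).2 (mem_of_superset (Ioo_mem_nhds hab.1 hab.2) fun s' hs' => ?_)
  refine tendsto_nhds_unique_of_frequently_eq (hcont s' hs') (hcont s hab) ?_
  refine ((mem_closure_iff_frequently.1 hx).and_eventually hG).mono fun x' hx' => ?_
  exact transverse_eq_of_verticalAt (fun t ht => hGJ ⟨hx'.2, (habJ ht).1⟩)
    (fun t ht => hx'.1 t (habJ ht).2) hs' hab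

section LongFibres

variable [CountableInterFilter (atTop : Filter R)]

theorem isOpen_iUnion_verticalAbove [FirstCountableTopology M] :
    IsOpen (⋃ β, F.verticalAbove β) := by
  refine isOpen_iff_mem_nhds.2 fun x hx => ?_
  obtain ⟨β, hβ⟩ := mem_iUnion.1 hx
  -- Arbitrarily tall charts share the small box `Q`, and near `x` every plaque meeting a high part
  -- of a fibre passes through `Q`.
  obtain ⟨γ, hγ, G, hG, hxG, htall⟩ := F.exists_frequently_prod_Ioc_subset x β
  obtain ⟨c, hc⟩ := exists_gt γ
  obtain ⟨α, hα⟩ := exists_gt c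
  have hQ : IsOpen (G ×ˢ Ioo γ α) := hG.prod isOpen_Ioo
  have hnear : ∃ᶠ s in atTop, ∀ᶠ x' in 𝓝 x,
      (∃ i, G ×ˢ Ioo γ α ⊆ F.U i ∧ ∀ t ∈ Ioc c s, (x', t) ∈ F.U i) ∧
        ∀ t ∈ Icc c s, ∃ q ∈ G ×ˢ Ioo γ α, F.samePlaque q (x', t) := by
    refine (htall.and_eventually (eventually_ge_atTop α)).mono fun s ⟨⟨i, hi⟩, hαs⟩ => ?_
    have hplaques := eventually_forall_exists_samePlaque (F := F) (i := i) (hα.le.trans hαs)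
      (hQ.mem_nhds ⟨hxG, hc, hα⟩) (fun t ht => hi ⟨hxG, hc.trans_le ht.1, ht.2⟩)
      fun t ht => hβ t (hγ.trans_lt (hc.trans_le ht.1))
    filter_upwards [hplaques, hG.mem_nhds hxG] with x' hx' hx'G
    exact ⟨⟨i, fun p hp => hi ⟨hp.1, hp.2.1, hp.2.2.le.trans hαs⟩,
      fun t ht => hi ⟨hx'G, hc.trans ht.1, ht.2⟩⟩, hx'⟩
  obtain ⟨N, hN, hfreq⟩ := exists_mem_frequently_forall hnear
  refine mem_of_superset hN fun x' hx' => mem_iUnion.2 ?_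
  refine exists_mem_verticalAbove hQ (hfreq.mono fun s hs => (hs x' hx').1) fun t ht => ?_
  obtain ⟨s, hs, hts⟩ := (hfreq.and_eventually (eventually_ge_atTop t)).exists
  exact (hs x' hx').2 t ⟨ht.le, hts⟩

theorem exists_verticalAbove_eq_univ [FirstCountableTopology M] [ConnectedSpace M]
    [TopologicalSpace.SeparableSpace M] (hne : (⋃ β, F.verticalAbove β).Nonempty) :
    ∃ β, F.verticalAbove β = univ := by
  have hheight : ∀ n, ∃ b, TopologicalSpace.denseSeq M n ∈ ⋃ β, F.verticalAbove β →
      TopologicalSpace.denseSeq M n ∈ F.verticalAbove b := fun n => by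
    by_cases hn : TopologicalSpace.denseSeq M n ∈ ⋃ β, F.verticalAbove β
    · exact (mem_iUnion.1 hn).imp fun _ hb _ => hb
    · exact ⟨(mem_iUnion.1 hne.some_mem).choose, hn.elim⟩
  choose b hb using hheight
  obtain ⟨β, hβ⟩ := exists_forall_lt_of_seq b
  have hsub : ⋃ β, F.verticalAbove β ⊆ F.verticalAbove β :=
    ((TopologicalSpace.denseRange_denseSeq M).open_subset_closure_inter
      isOpen_iUnion_verticalAbove).trans <| closure_minimal
        (by rintro _ ⟨hn, n, rfl⟩; exact verticalAbove_mono (hβ n).le (hb n hn))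
        isClosed_verticalAbove
  have heq := hsub.antisymm (subset_iUnion _ β)
  exact ⟨β, heq ▸ IsClopen.eq_univ ⟨heq ▸ isClosed_verticalAbove, isOpen_iUnion_verticalAbove⟩ hne⟩

end LongFibres

theorem VerticalAt.eventually_fst_eq {y : Fin m → ℝ} {u : ℝ}
    (h : F.VerticalAt (F.plaqueMap i y u)) :
    ∀ᶠ u' in 𝓝 u, (F.plaqueMap i y u).1 = (F.plaqueMap i y u').1 := by
  set p := F.plaqueMap i y u
  have hpU : p ∈ F.U i := plaqueMap_mem
  have hI : {s | (p.1, s) ∈ F.U i ∧ F.transverse i (p.1, s) = y} ∈ 𝓝 p.2 := by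
    filter_upwards [(verticalAt_iff hpU).1 h,
      (Continuous.prodMk_right p.1).continuousAt ((F.isOpen i).mem_nhds hpU)] with s hs hsU
    exact ⟨hsU, hs.trans transverse_plaqueMap⟩
  have hopen : 𝓝 (F.height i (p.1, p.2)) ≤ map (fun s => F.height i (p.1, s)) (𝓝 p.2) :=
    nhds_le_map_nhds_of_continuousOn_injOn hI
      (continuousOn_height.comp (by fun_prop) fun s hs => hs.1) fun s hs s' hs' heq =>
        congrArg Prod.snd (eq_of_height_eq hs.1 hs'.1 heq (hs.2.trans hs'.2.symm))
  have hu : F.height i (p.1, p.2) = u := height_plaqueMap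
  refine hu ▸ hopen (mem_map.2 (mem_of_superset hI fun s hs => ?_))
  have hs' := plaqueMap_height hs.1
  rw [hs.2] at hs'
  exact (congrArg Prod.fst hs').symm

theorem comparable_height_snd (hβ : F.verticalAbove β = univ) (hp : β < p.2) (hi : p ∈ F.U i) :
    Comparable F.samePlaque (F.height i) Prod.snd p := by
  refine comparable_height hi ((isOpen_Ioi.preimage continuous_snd).mem_nhds hp)
    continuous_snd.continuousOn fun y I hI hIW u hu u' hu' heq => ?_
  have hfst : (F.plaqueMap i y u).1 = (F.plaqueMap i y u').1 :=
    eq_of_isPreconnected_of_eventually_eq (f := fun u => (F.plaqueMap i y u).1) hI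
      (fun v hv => nhdsWithin_le_nhds <| VerticalAt.eventually_fst_eq <|
        (hβ.ge (mem_univ _) : (F.plaqueMap i y v).1 ∈ F.verticalAbove β) _ (hIW hv)) hu hu'
  rw [← height_plaqueMap (F := F) (i := i) (y := y) (u := u), Prod.ext hfst heq, height_plaqueMap]

end Vertical
end Foliation

/-! ### Parametrised leaves -/

/-- The sign involution as a homeomorphism. -/
def LongLine.negHomeomorph : LongLine ≃ₜ LongLine where
  toEquiv := involutive_neg.toPerm
  continuous_toFun := continuous_neg
  continuous_invFun := continuous_neg

theorem LongRay.strictMono_inL : StrictMono LongRay.inL := fun _ _ h => LongLine.strictMono_pos h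

theorem LongRay.continuous_inL : Continuous LongRay.inL :=
  LongLine.continuous_pos.comp continuous_toCLR

theorem LongRay.nhds_inL_le (a : LongRay) : 𝓝 a.inL ≤ map LongRay.inL (𝓝 a) :=
  nhds_le_map_nhds_of_continuousOn_injOn univ_mem continuous_inL.continuousOn
    strictMono_inL.injective.injOn

namespace Foliation

section LeafTopology

variable {X : Type*} [TopologicalSpace X] {m : ℕ} {F : Foliation X 1 m} {L P : Set X}

theorem IsLeaf.saturated (hL : F.IsLeaf L) : F.Saturated L := by
  obtain ⟨x, rfl⟩ := hL
  exact fun _ hy _ hz => .trans _ _ _ hy hz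

theorem Saturated.plaque_subset (hL : F.Saturated L) (hP : F.IsPlaque P) {x : X} (hxP : x ∈ P)
    (hxL : x ∈ L) : P ⊆ L :=
  fun y hy => hL x hxL y (.rel _ _ ⟨P, hP, hxP, hy⟩)

theorem continuous_leafTopology_plaqueMap {i : F.ι} {y : Fin m → ℝ}
    (hL : ∀ u, F.plaqueMap i y u ∈ L) :
    Continuous[_, F.leafTopology L] fun u => (⟨F.plaqueMap i y u, hL u⟩ : L) := by
  refine continuous_generateFrom_iff.2 ?_
  rintro _ ⟨P, hP, -, rfl⟩
  obtain ⟨j, z, rfl⟩ := isPlaque_iff.1 hP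
  refine isOpen_iff_mem_nhds.2 fun u hu => ?_
  obtain ⟨huj, rfl⟩ := mem_plaqueFibre.1 hu
  have hUj := (F.continuous_plaqueMap i y).continuousAt ((F.isOpen j).mem_nhds huj)
  filter_upwards [hUj] with u' hu'
  exact mem_plaqueFibre.2 ⟨hu', (transverse_eq_iff plaqueMap_mem plaqueMap_mem hu' huj).1
    (transverse_plaqueMap.trans transverse_plaqueMap.symm)⟩

end LeafTopology

section LeafParam

variable {X S T : Type*} [TopologicalSpace X] [TopologicalSpace S] [TopologicalSpace T] {m : ℕ}

/-- An injective parametrisation of a union of leaves, with respect to which the parametrised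
plaques are continuous. Continuity of `h` itself is not required: it follows when `T` is an ordered
space. -/
structure IsLeafParam (F : Foliation X 1 m) (h : T → X) : Prop where
  injective : Function.Injective h
  exists_lift : ∀ {i t}, h t ∈ F.U i →
    ∃ κ : ℝ → T, Continuous κ ∧ ∀ u, h (κ u) = F.plaqueMap i (F.transverse i (h t)) u

variable {F : Foliation X 1 m} {h : T → X}

theorem Saturated.exists_isLeafParam {L : Set X} (hL : F.Saturated L)
    (he : Nonempty (@Homeomorph L T (F.leafTopology L) inferInstance)) :
    ∃ h : T → X, F.IsLeafParam h := by
  let _ := F.leafTopology L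
  obtain ⟨e⟩ := he
  refine ⟨fun t => (e.symm t).1, Subtype.val_injective.comp e.symm.injective, fun {i t} ht => ?_⟩
  have hsub := hL.plaque_subset (isPlaque_iff.2 ⟨i, _, rfl⟩) (mem_plaqueFibre.2 ⟨ht, rfl⟩)
    (e.symm t).2
  have hmem : ∀ u, F.plaqueMap i (F.transverse i (e.symm t).1) u ∈ L := fun u =>
    hsub (mem_plaqueFibre.2 ⟨plaqueMap_mem, transverse_plaqueMap⟩)
  refine ⟨fun u => e ⟨_, hmem u⟩, e.continuous.comp (continuous_leafTopology_plaqueMap hmem),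
    fun u => ?_⟩
  rw [e.symm_apply_apply]

theorem IsLeafParam.comp_homeomorph (hh : F.IsLeafParam h) (φ : S ≃ₜ T) :
    F.IsLeafParam (h ∘ φ) where
  injective := hh.injective.comp φ.injective
  exists_lift ht := by
    obtain ⟨κ, hκ, hκh⟩ := hh.exists_lift ht
    exact ⟨φ.symm ∘ κ, φ.symm.continuous.comp hκ, fun u => by
      rw [Function.comp_apply, Function.comp_apply, φ.apply_symm_apply, hκh]; rfl⟩

end LeafParam

namespace IsLeafParam

variable {X T A : Type*} [TopologicalSpace X] [LinearOrder T] [TopologicalSpace T]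
  [OrderTopology T] {m : ℕ} {F : Foliation X 1 m} {h : T → X} {i : F.ι} {t : T}

theorem exists_local_inverse (hh : F.IsLeafParam h) (ht : h t ∈ F.U i) :
    ∃ κ : ℝ → T, Continuous κ ∧ Function.Injective κ ∧ κ (F.height i (h t)) = t ∧
      𝓝 t ≤ map κ (𝓝 (F.height i (h t))) ∧
      ∀ u, h (κ u) = F.plaqueMap i (F.transverse i (h t)) u := by
  obtain ⟨κ, hκ, hκh⟩ := hh.exists_lift ht
  have hinj : Function.Injective κ := fun u u' huu' => by
    have heq := congrArg (F.height i ∘ h) huu'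
    simpa only [Function.comp_apply, hκh, height_plaqueMap] using heq
  have hκt : κ (F.height i (h t)) = t := hh.injective ((hκh _).trans (plaqueMap_height ht))
  have hnhds := nhds_le_map_nhds_of_continuousOn_injOn univ_mem hκ.continuousOn hinj.injOn
    (t := F.height i (h t))
  exact ⟨κ, hκ, hinj, hκt, (congrArg 𝓝 hκt).ge.trans hnhds, hκh⟩

theorem continuous (hh : F.IsLeafParam h) : Continuous h := by
  refine continuous_iff_continuousAt.2 fun t => ?_
  obtain ⟨i, hi⟩ := F.covers (h t)
  obtain ⟨κ, -, -, -, hnhds, hκh⟩ := hh.exists_local_inverse hi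
  refine Tendsto.mono_left (tendsto_map'_iff.2 ?_) hnhds
  exact ((F.continuous_plaqueMap i _).tendsto' _ _ (plaqueMap_height hi)).congr
    fun u => (hκh u).symm

theorem eventually_samePlaque (hh : F.IsLeafParam h) (t : T) :
    ∀ᶠ z in 𝓝 t ×ˢ 𝓝 t, F.samePlaque (h z.1) (h z.2) := by
  obtain ⟨i, hi⟩ := F.covers (h t)
  obtain ⟨κ, -, -, -, hnhds, hκh⟩ := hh.exists_local_inverse hi
  have hκ : ∀ᶠ s in 𝓝 t, ∃ u, κ u = s := hnhds range_mem_map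
  filter_upwards [hκ.prod_mk hκ] with ⟨s, s'⟩ hss'
  obtain ⟨⟨u, rfl : κ u = s⟩, u', rfl : κ u' = s'⟩ := hss'
  rw [hκh, hκh]
  exact (samePlaque_iff plaqueMap_mem plaqueMap_mem).2
    (transverse_plaqueMap.trans transverse_plaqueMap.symm)

theorem comparable_height_id (hh : F.IsLeafParam h) (ht : h t ∈ F.U i) :
    Comparable ⊤ (F.height i ∘ h) id t := by
  obtain ⟨κ, hκ, hinj, -, hnhds, hκh⟩ := hh.exists_local_inverse ht
  have hrange : ∀ᶠ s in 𝓝 t, ∃ u, κ u = s := hnhds range_mem_map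
  have hheight : ∀ u, F.height i (h (κ u)) = u := fun u => by rw [hκh, height_plaqueMap]
  refine (hκ.strictMono_of_inj hinj).imp (fun hmono => ?_) fun hanti => ?_
  all_goals
    filter_upwards [hrange.prod_mk hrange] with ⟨s, s'⟩ hss' _
    obtain ⟨⟨u, rfl : κ u = s⟩, u', rfl : κ u' = s'⟩ := hss'
    simp only [Function.comp_apply, hheight, id]
  · exact hmono.lt_iff_lt.symm
  · exact hanti.lt_iff_gt.symm

theorem increasesNear_height (hh : F.IsLeafParam h) (ht : h t ∈ F.U i) :
    IncreasesNear ⊤ (F.height i ∘ h) t := by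
  obtain ⟨κ, hκ, -, hκt, -, hκh⟩ := hh.exists_local_inverse ht
  have htend : Tendsto (fun u => (t, κ u)) (𝓝 (F.height i (h t))) (𝓝 t ×ˢ 𝓝 t) :=
    tendsto_const_nhds.prodMk (hκ.tendsto' _ _ hκt)
  refine htend.frequently ((frequently_gt_nhds _).mono fun u hu => ⟨trivial, ?_⟩)
  simpa only [Function.comp_apply, hκh, height_plaqueMap] using hu

theorem isSectionAt_comap (hh : F.IsLeafParam h) (t : T) :
    (F.orientationCocycle.comap hh.continuous).IsSectionAt
      (fun i => CoOriented ⊤ (F.height i ∘ h) id) t where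
  eventually_iff {i} hi := (hh.comparable_height_id hi).eventually_coOriented_iff <|
    (hh.continuous.continuousAt.eventually ((F.isOpen i).eventually_mem hi)).mono
      fun _ => hh.increasesNear_height
  iff_agree {i j} hi hj := by
    have hij := comparable_height_height hi hj
    have hplaque : ∀ᶠ z in 𝓝 t ×ˢ 𝓝 t, (⊤ : T → T → Prop) z.1 z.2 → _ :=
      (hh.eventually_samePlaque t).mono fun _ hz _ => hz
    have hincr := hh.increasesNear_height hi
    rw [(hij.comap hh.continuous.continuousAt hplaque).coOriented_iff
      (hh.comparable_height_id hj) hincr,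
      hij.coOriented_comap_iff hh.continuous.continuousAt hplaque hincr]
    rfl

theorem eqAt_coOriented_iff [LinearOrder A] (hh : F.IsLeafParam h) {f : X → A}
    (hf : ∀ i, h t ∈ F.U i → Comparable F.samePlaque (F.height i) f (h t)) :
    (F.orientationCocycle.comap hh.continuous).EqAt
      (fun i => CoOriented F.samePlaque (F.height i) f ∘ h)
      (fun i => CoOriented ⊤ (F.height i ∘ h) id) t ↔ CoOriented ⊤ (f ∘ h) id t := by
  obtain ⟨i, hi⟩ := F.covers (h t)
  have hplaque : ∀ᶠ z in 𝓝 t ×ˢ 𝓝 t, (⊤ : T → T → Prop) z.1 z.2 → _ :=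
    (hh.eventually_samePlaque t).mono fun _ hz _ => hz
  have hincr := hh.increasesNear_height hi
  have hfi := (hf i hi).comap hh.continuous.continuousAt hplaque
  have hid := hh.comparable_height_id hi
  rw [((isSectionAt_coOriented hf).comap hh.continuous rfl).eqAt_iff (hh.isSectionAt_comap t) hi,
    Function.comp_apply, ← (hf i hi).coOriented_comap_iff hh.continuous.continuousAt hplaque hincr,
    hfi.symm.coOriented_iff hid (hfi.increasesNear hincr)]
  exact iff_congr ⟨CoOriented.symm, CoOriented.symm⟩ Iff.rfl

end IsLeafParam
end Foliation

theorem Squat.exists_fst_eq_strictMonoOn_snd {M : Type*} [TopologicalSpace M] (hsq : Squat M)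
    {g : LongRay → M × LongRay} (hg : Continuous g) (hinj : Function.Injective g) :
    ∃ x a, (∀ t ∈ Ici a, (g t).1 = x) ∧ StrictMonoOn (fun t => (g t).2) (Ici a) := by
  obtain ⟨a, x, hx⟩ := hsq (fun t => (g t).1) hg.fst
  refine ⟨x, a, hx, ?_⟩
  have hinj_snd : InjOn (fun t => (g t).2) (Ici a) := fun t ht t' ht' heq =>
    hinj (Prod.ext ((hx t ht).trans (hx t' ht').symm) heq)
  exact (strictMonoOn_or_strictAntiOn_of_ordConnected hg.snd.continuousOn hinj_snd).resolve_right
    LongRay.not_strictAntiOn_Ici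

namespace Foliation

theorem firstCountableTopology_fst {M R : Type*} [TopologicalSpace M] [TopologicalSpace R]
    [Nonempty R] {m : ℕ} (F : Foliation (M × R) 1 m) : FirstCountableTopology M :=
  have := F.firstCountableTopology
  (isEmbedding_prodMkLeft (Classical.arbitrary R)).isInducing.firstCountableTopology

theorem firstCountableTopology_snd {M R : Type*} [TopologicalSpace M] [TopologicalSpace R]
    [Nonempty M] {m : ℕ} (F : Foliation (M × R) 1 m) : FirstCountableTopology R :=
  have := F.firstCountableTopology
  (isEmbedding_prodMkRight (Classical.arbitrary M)).isInducing.firstCountableTopology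

namespace IsLeafParam

theorem increasesNear_id {X T : Type*} [TopologicalSpace X] [LinearOrder T] [TopologicalSpace T]
    [OrderTopology T] {m : ℕ} {F : Foliation X 1 m} {h : T → X} (hh : F.IsLeafParam h) (t : T) :
    IncreasesNear ⊤ (id : T → T) t := by
  obtain ⟨i, hi⟩ := F.covers (h t)
  exact (hh.comparable_height_id hi).increasesNear (hh.increasesNear_height hi)

theorem coOriented_snd_iff {M R T : Type*} [TopologicalSpace M]
    [ConditionallyCompleteLinearOrder R] [DenselyOrdered R] [NoMinOrder R] [NoMaxOrder R]
    [TopologicalSpace R] [OrderTopology R] [LinearOrder T] [TopologicalSpace T] [OrderTopology T]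
    [PreconnectedSpace T] {m : ℕ} {F : Foliation (M × R) 1 m} {h : T → M × R}
    (hh : F.IsLeafParam h) {β : R} (hβ : F.verticalAbove β = univ) {t t' : T} (ht : β < (h t).2)
    (ht' : β < (h t').2) :
    CoOriented ⊤ (Prod.snd ∘ h) id t ↔ CoOriented ⊤ (Prod.snd ∘ h) id t' := by
  have hsnd : ∀ p : M × R, β < p.2 → ∀ i, p ∈ F.U i →
      Comparable F.samePlaque (F.height i) Prod.snd p := fun _ hp _ => comparable_height_snd hβ hp
  obtain ⟨o, ho, hoβ⟩ :=
    SignCocycle.exists_section_extending fun p hp => isSectionAt_coOriented (hsnd p hp)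
  have heqAt : ∀ s, β < (h s).2 →
      ((F.orientationCocycle.comap hh.continuous).EqAt (fun i => o i ∘ h)
        (fun i => CoOriented ⊤ (F.height i ∘ h) id) s ↔ CoOriented ⊤ (Prod.snd ∘ h) id s) := by
    intro s hs
    have hos : (F.orientationCocycle.comap hh.continuous).EqAt (fun i => o i ∘ h)
        (fun i => CoOriented F.samePlaque (F.height i) Prod.snd ∘ h) s := hoβ (h s) hs
    rw [← hh.eqAt_coOriented_iff (hsnd _ hs)]
    exact ⟨hos.symm.trans, hos.trans⟩
  rw [← heqAt t ht, ← heqAt t' ht']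
  exact SignCocycle.eqAt_iff_eqAt_of_isPreconnected isPreconnected_univ
    (fun s _ => (ho (h s)).comap hh.continuous rfl) (fun s _ => hh.isSectionAt_comap s)
    (mem_univ t) (mem_univ t')

section LongLine

variable {M : Type*} [TopologicalSpace M] {m : ℕ} {F : Foliation (M × LongRay) 1 m}
  {h : LongLine → M × LongRay}

theorem exists_fst_eq_strictMonoOn_snd (hh : F.IsLeafParam h) (hsq : Squat M) :
    ∃ x a, (∀ t ∈ Ici a, (h (LongRay.inL t)).1 = x) ∧
      StrictMonoOn (fun t => (h (LongRay.inL t)).2) (Ici a) :=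
  hsq.exists_fst_eq_strictMonoOn_snd (hh.continuous.comp LongRay.continuous_inL)
    (hh.injective.comp LongRay.strictMono_inL.injective)

variable [FirstCountableTopology LongRay]

theorem nonempty_iUnion_verticalAbove (hh : F.IsLeafParam h) (hsq : Squat M) :
    (⋃ β, F.verticalAbove β).Nonempty := by
  obtain ⟨x, a, hx, hmono⟩ := hh.exists_fst_eq_strictMonoOn_snd hsq
  let r : LongRay → LongRay := fun t => (h t.inL).2
  have hr : Continuous r := (hh.continuous.comp LongRay.continuous_inL).snd
  have hmem : ∀ t ∈ Ici a, h t.inL = (x, r t) := fun t ht => Prod.ext (hx t ht) rfl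
  refine ⟨x, mem_iUnion.2 ⟨r a, fun s hs => ?_⟩⟩
  obtain ⟨_, ⟨b, hab, rfl⟩, hsb⟩ :=
    not_bddAbove_iff.1 (not_bddAbove_image_of_strictMonoOn_Ici hmono) s
  obtain ⟨t, ht, rfl⟩ := intermediate_value_Ioo hab hr.continuousOn ⟨hs, hsb⟩
  have hIci : Ici a ∈ 𝓝 t := Ici_mem_nhds ht.1
  have hnhds : 𝓝 (r t) ≤ map r (𝓝 t) :=
    nhds_le_map_nhds_of_continuousOn_injOn hIci hr.continuousOn hmono.injOn
  have hplaque : ∀ᶠ t' in 𝓝 t, F.samePlaque (h t'.inL) (h t.inL) :=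
    LongRay.continuous_inL.continuousAt.eventually
      ((hh.eventually_samePlaque t.inL).curry.mono fun _ hz => hz.self_of_nhds)
  refine hnhds (mem_map.2 ?_)
  filter_upwards [hplaque, hIci] with t' hsame ht'
  rwa [hmem t' ht', hmem t ht.1.le] at hsame

theorem exists_coOriented_snd (hh : F.IsLeafParam h) (hsq : Squat M) (β : LongRay) :
    ∃ t : LongRay, β < (h t.inL).2 ∧ CoOriented ⊤ (Prod.snd ∘ h) id t.inL := by
  obtain ⟨x, a, -, hmono⟩ := hh.exists_fst_eq_strictMonoOn_snd hsq
  obtain ⟨_, ⟨b, hab, rfl⟩, hβb⟩ :=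
    not_bddAbove_iff.1 (not_bddAbove_image_of_strictMonoOn_Ici hmono) β
  obtain ⟨t, hbt⟩ := exists_gt b
  have hat : a < t := (hab : a ≤ b).trans_lt hbt
  refine ⟨t, hβb.trans (hmono hab hat.le hbt), ?_⟩
  have hIci : ∀ᶠ z in 𝓝 t.inL, ∃ s ∈ Ici a, s.inL = z :=
    LongRay.nhds_inL_le t (image_mem_map (Ici_mem_nhds hat))
  filter_upwards [hIci.prod_mk hIci] with ⟨z, z'⟩ hz _
  obtain ⟨⟨s, hs, rfl : s.inL = z⟩, s', hs', rfl : s'.inL = z'⟩ := hz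
  exact (hmono.lt_iff_lt hs hs').trans LongRay.strictMono_inL.lt_iff_lt.symm

end LongLine
end IsLeafParam
end Foliation

theorem LongLine.not_coOriented_neg {z : LongLine} (hz : IncreasesNear ⊤ (id : LongLine → _) z) :
    ¬ CoOriented ⊤ id LongLine.neg z := fun hco =>
  hco.not_contraOriented hz <| .of_forall fun _ _ => LongLine.strictAnti_neg.lt_iff_gt.symm

theorem statement14_general {m : ℕ} {M : Type*} [TopologicalSpace M] [ConnectedSpace M]
    [TopologicalSpace.SeparableSpace M] (hsq : Squat M) (F : Foliation (M × LongRay) 1 m)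
    {L : Set (M × LongRay)} (hL : F.IsLeaf L) :
    ¬ Nonempty (@Homeomorph L LongLine (F.leafTopology L) inferInstance) := by
  intro he
  obtain ⟨h, hh⟩ := hL.saturated.exists_isLeafParam he
  have := F.firstCountableTopology_fst
  have := F.firstCountableTopology_snd
  obtain ⟨β, hβ⟩ := Foliation.exists_verticalAbove_eq_univ (hh.nonempty_iUnion_verticalAbove hsq)
  obtain ⟨t, ht, hright⟩ := hh.exists_coOriented_snd hsq β
  have hh' := hh.comp_homeomorph LongLine.negHomeomorph
  obtain ⟨t', ht', hleft⟩ := hh'.exists_coOriented_snd hsq β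
  have hup : CoOriented ⊤ (Prod.snd ∘ h) id (LongLine.neg t'.inL) :=
    (hh.coOriented_snd_iff hβ ht ht').1 hright
  have hneg : CoOriented ⊤ (Prod.snd ∘ h ∘ LongLine.neg) LongLine.neg t'.inL :=
    hup.comap LongLine.continuous_neg.continuousAt (.of_forall fun _ _ => trivial)
  exact LongLine.not_coOriented_neg (hh.increasesNear_id _) (hleft.symm.trans hneg)

/-- If `M` is a squat, separable, connected `m`-manifold and `ℱ` is a
dimension-one foliation on `M × 𝕃₊` with at least one long leaf, then no leaf of `ℱ` is
homeomorphic, in its leaf topology, to the long line `𝕃`. -/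
theorem statement14 (m : ℕ) (hm : 1 ≤ m) (M : Type) [TopologicalSpace M]
    (hM : IsTopManifold M m) (hconn : ConnectedSpace M) (hsq : Squat M)
    [TopologicalSpace.SeparableSpace M]
    (F : Foliation (M × LongRay) 1 m)
    (hlong : ∃ L, F.IsLongLeaf L) :
    ∀ L, F.IsLeaf L →
      ¬ Nonempty (@Homeomorph L LongLine (F.leafTopology L) inferInstance) :=
  fun _ => statement14_general hsq F
end
end

section
/- The rectangular quadrant 𝐐 = 𝕃≥0 × 𝕃≥0 (with the product topology) and the rhombic quadrant Q̄ = {(x, y) ∈ 𝕃² : −y ≤ x ≤ y} (with the subspace topology inherited from 𝕃 × 𝕃) are not homeomorphic. -/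
noncomputable section

open Set Topology Filter

universe u

/-!
A continuous map from the closed long ray to itself is either eventually constant or fixes the
points of a closed unbounded set, and two closed unbounded sets always meet. Consequently a curve
in the rhombic quadrant that is not eventually constant either agrees with one of the edges
`x = ±y` on a closed unbounded set or has eventually constant `x`.

Let `h` be a homeomorphism from the rectangular quadrant to the rhombic one. By injectivity at most
one of the curves `h(·, c)` agrees with a given edge on a closed unbounded set, so all but at most
two of them have eventually constant `x`, and by continuity in `c` all of them do. Now pull an edge
back by `h`: if one coordinate of the resulting curve were eventually constant, the edge would
agree on an unbounded set with a curve `h(·, c)` or `h(c, ·)`, along which `x` is eventually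
constant, whereas `x` takes each value at most once on an edge. So both edges pull back to curves
that agree with the diagonal on closed unbounded sets. These sets meet, hence so do the edges,
away from the origin.
-/

section CountableInterFilter

variable {T W : Type*} {l : Filter T} [CountableInterFilter l] [TopologicalSpace W]

theorem eventuallyConst_of_tendsto_nhds [FirstCountableTopology W] [T1Space W] {f : T → W} {c : W}
    (hf : Tendsto f l (𝓝 c)) : EventuallyConst f l := by
  obtain ⟨U, hU, hc⟩ := isGδ_iff_eq_iInter_nat.1 (IsGδ.singleton c)
  have hcU (n : ℕ) : c ∈ U n := mem_iInter.1 (hc ▸ mem_singleton c) n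
  refine .of_tendsto (x := c) (tendsto_pure.2 ?_)
  filter_upwards [eventually_countable_forall.2 fun n => hf ((hU n).mem_nhds (hcU n))] with t ht
  rwa [← mem_singleton_iff, hc, mem_iInter]

theorem isClosed_setOf_eventuallyConst {Z : Type*} [TopologicalSpace Z] [SequentialSpace Z]
    [T2Space W] [NeBot l] {F : T → Z → W} (hF : ∀ t, Continuous (F t)) :
    IsClosed {z | EventuallyConst (F · z) l} := by
  refine IsSeqClosed.isClosed fun z c hz hzc => ?_
  have : Nonempty W := (nonempty_of_neBot l).map (F · c)
  choose w hw using fun n => (hz n).eventuallyEq_const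
  have hlim : ∀ᶠ t in l, Tendsto w atTop (𝓝 (F t c)) := by
    filter_upwards [eventually_countable_forall.2 hw] with t ht
    exact (((hF t).tendsto c).comp hzc).congr ht
  obtain ⟨s, hs⟩ := hlim.exists
  exact .of_tendsto (tendsto_pure.2 (hlim.mono fun t ht => tendsto_nhds_unique ht hs))

end CountableInterFilter

section ClosedUnbounded

theorem not_eventuallyConst_atTop_of_injective {K X : Type*} [SemilatticeSup K] [Nonempty K]
    [NoMaxOrder K] {f : K → X} (hf : Function.Injective f) : ¬ EventuallyConst f atTop := by
  rw [eventuallyConst_atTop]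
  rintro ⟨s, hs⟩
  obtain ⟨t, hst⟩ := exists_gt s
  exact hst.ne' (hf (hs t hst.le))

variable {K : Type*} [ConditionallyCompleteLinearOrder K] [Nonempty K] [TopologicalSpace K]
  [OrderTopology K] [CountableInterFilter (atTop : Filter K)]

theorem frequently_diag_mem_of_isClosed {G : Set (K × K)} (hG : IsClosed G)
    (h : ∃ᶠ p in atTop, p ∈ G) : ∃ᶠ t in atTop, (t, t) ∈ G := by
  -- Alternating between the two coordinates of points of `G` gives two interleaved increasing
  -- sequences, which have the same supremum.
  rw [frequently_atTop] at h ⊢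
  intro b
  choose g hle hgG using fun s : K => h (s, s)
  let u : ℕ → K := fun n => (fun s => max (g s).1 (g s).2)^[n] b
  have hu (n : ℕ) : u (n + 1) = max (g (u n)).1 (g (u n)).2 := Function.iterate_succ_apply' ..
  have hu₁ (n : ℕ) : (g (u n)).1 ≤ u (n + 1) := hu n ▸ le_max_left ..
  have hu₂ (n : ℕ) : (g (u n)).2 ≤ u (n + 1) := hu n ▸ le_max_right ..
  have hmono : Monotone u := monotone_nat_of_le_succ fun n => (hle (u n)).1.trans (hu₁ n)
  have hbdd : BddAbove (range u) := by
    obtain ⟨s, hs⟩ := (eventually_countable_forall.2 fun n => eventually_ge_atTop (u n)).exists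
    exact ⟨s, forall_mem_range.2 hs⟩
  have hlim : Tendsto u atTop (𝓝 (⨆ n, u n)) := tendsto_atTop_ciSup hmono hbdd
  have hlim' := (tendsto_add_atTop_iff_nat 1).2 hlim
  have hlim₁ := tendsto_of_tendsto_of_tendsto_of_le_of_le hlim hlim' (fun n => (hle (u n)).1) hu₁
  have hlim₂ := tendsto_of_tendsto_of_tendsto_of_le_of_le hlim hlim' (fun n => (hle (u n)).2) hu₂
  exact ⟨⨆ n, u n, le_ciSup hbdd 0,
    hG.mem_of_tendsto (hlim₁.prodMk_nhds hlim₂) (.of_forall fun n => hgG (u n))⟩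

theorem frequently_mem_inter_of_isClosed {A B : Set K} (hA : IsClosed A) (hB : IsClosed B)
    (hA' : ∃ᶠ t in atTop, t ∈ A) (hB' : ∃ᶠ t in atTop, t ∈ B) : ∃ᶠ t in atTop, t ∈ A ∩ B := by
  refine frequently_diag_mem_of_isClosed (hA.prod hB) (frequently_atTop.2 fun s => ?_)
  obtain ⟨x, hx, hxA⟩ := frequently_atTop.1 hA' s.1
  obtain ⟨y, hy, hyB⟩ := frequently_atTop.1 hB' s.2
  exact ⟨(x, y), ⟨hx, hy⟩, hxA, hyB⟩

theorem subsingleton_setOf_frequently_eq {X : Type*} [TopologicalSpace X] [T2Space X]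
    {F : K × K → X} (hF : Continuous F) (hinj : Function.Injective F) {ε : K → X}
    (hε : Continuous ε) : {c | ∃ᶠ t in atTop, F (t, c) = ε t}.Subsingleton := by
  intro c hc c' hc'
  obtain ⟨t, h, h'⟩ := (frequently_mem_inter_of_isClosed
    (isClosed_eq (f := fun t => F (t, c)) (by fun_prop) hε)
    (isClosed_eq (f := fun t => F (t, c')) (by fun_prop) hε) hc hc').exists
  exact congrArg Prod.snd (hinj (h.trans h'.symm))

theorem frequently_eq_self_of_frequently_ge {f : K → K} (hf : Continuous f)
    (h : ∀ m, ∃ᶠ t in atTop, m ≤ f t) : ∃ᶠ t in atTop, f t = t := by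
  refine frequently_diag_mem_of_isClosed (G := {p | f p.1 = p.2})
    (isClosed_eq (by fun_prop) continuous_snd) (frequently_atTop.2 fun s => ?_)
  obtain ⟨x, hx, hfx⟩ := frequently_atTop.1 (h s.2) s.1
  exact ⟨(x, f x), ⟨hx, hfx⟩, rfl⟩

theorem eventuallyConst_of_eventually_mem_isCompact {W : Type*} [TopologicalSpace W] [T25Space W]
    [FirstCountableTopology W] {f : K → W} (hf : Continuous f) {S : Set W} (hS : IsCompact S)
    (hfS : ∀ᶠ t in atTop, f t ∈ S) : EventuallyConst f atTop := by
  -- Two cluster points would have disjoint closed neighbourhoods, whose preimages are closed,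
  -- unbounded and disjoint.
  obtain ⟨c, -, hc⟩ := hS (le_principal_iff.2 hfS : map f atTop ≤ 𝓟 S)
  refine eventuallyConst_of_tendsto_nhds (c := c)
    (hS.le_nhds_of_unique_clusterPt hfS fun c' _ hc' => ?_)
  by_contra hne
  obtain ⟨U, hcU, hU, V, hcV, hV, hUV⟩ := exists_open_nhds_disjoint_closure hne
  have frequently_mem_closure {x : W} {O : Set W} (hx : ClusterPt x (map f atTop)) (hxO : x ∈ O)
      (hO : IsOpen O) : ∃ᶠ t in atTop, t ∈ f ⁻¹' closure O :=
    (clusterPt_iff_frequently.1 hx O (hO.mem_nhds hxO)).mono fun _ h => subset_closure h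
  obtain ⟨t, htU, htV⟩ := (frequently_mem_inter_of_isClosed (isClosed_closure.preimage hf)
    (isClosed_closure.preimage hf) (frequently_mem_closure hc' hcU hU)
    (frequently_mem_closure hc hcV hV)).exists
  exact hUV.notMem_of_mem_left htU htV

end ClosedUnbounded

/-- The rhombic quadrant `{(x, y) : -y ≤ x ≤ y}` over the double of `K`. The coordinate `x` is
encoded by its positive and negative parts, at most one of which differs from `⊥`, so the point
`(x, y)` becomes `((x⁺, x⁻), y)`. -/
def rhombicQuadrant (K : Type*) [LE K] [OrderBot K] : Set ((K × K) × K) :=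
  {z | z.1.1 ≤ z.2 ∧ z.1.2 ≤ z.2 ∧ (z.1.1 = ⊥ ∨ z.1.2 = ⊥)}

namespace rhombicQuadrant

variable {K : Type*} [PartialOrder K] [OrderBot K]

/-- The edge `x = y` of the rhombic quadrant. -/
def rightEdge (t : K) : rhombicQuadrant K := ⟨((t, ⊥), t), le_rfl, bot_le, .inr rfl⟩

/-- The edge `x = -y` of the rhombic quadrant. -/
def leftEdge (t : K) : rhombicQuadrant K := ⟨((⊥, t), t), bot_le, le_rfl, .inl rfl⟩

theorem eq_rightEdge {z : rhombicQuadrant K} {t : K} (hx : z.1.1.1 = t) (hy : z.1.2 = t) :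
    z = rightEdge t := by
  have hn : z.1.1.2 = ⊥ := z.2.2.2.elim (fun hp => le_bot_iff.1 <| by
    rw [← hp, hx, ← hy]; exact z.2.2.1) id
  exact Subtype.ext (Prod.ext (Prod.ext hx hn) hy)

theorem eq_leftEdge {z : rhombicQuadrant K} {t : K} (hx : z.1.1.2 = t) (hy : z.1.2 = t) :
    z = leftEdge t := by
  have hp : z.1.1.1 = ⊥ := z.2.2.2.elim id fun hn => le_bot_iff.1 <| by
    rw [← hn, hx, ← hy]; exact z.2.1
  exact Subtype.ext (Prod.ext (Prod.ext hp hx) hy)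

variable [TopologicalSpace K]

theorem continuous_rightEdge : Continuous (rightEdge : K → rhombicQuadrant K) := by
  unfold rightEdge
  fun_prop

theorem continuous_leftEdge : Continuous (leftEdge : K → rhombicQuadrant K) := by
  unfold leftEdge
  fun_prop

end rhombicQuadrant

section Quadrants

open rhombicQuadrant

variable {K : Type*} [ConditionallyCompleteLinearOrderBot K] [TopologicalSpace K]
  [OrderTopology K] [FirstCountableTopology K] [CountableInterFilter (atTop : Filter K)]

theorem eventuallyConst_or_frequently_eq_self {f : K → K} (hf : Continuous f) :
    EventuallyConst f atTop ∨ ∃ᶠ t in atTop, f t = t := by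
  by_cases h : ∃ m, ∀ᶠ t in atTop, f t ≤ m
  · obtain ⟨m, hm⟩ := h
    exact .inl (eventuallyConst_of_eventually_mem_isCompact hf isCompact_Icc
      (hm.mono fun t ht => ⟨bot_le, ht⟩))
  · push Not at h
    exact .inr (frequently_eq_self_of_frequently_ge hf fun m => (h m).mono fun t ht => ht.le)

namespace rhombicQuadrant

theorem eventuallyConst_of_height {γ : K → rhombicQuadrant K} (hγ : Continuous γ)
    (hy : EventuallyConst (fun t => (γ t).1.2) atTop) : EventuallyConst γ atTop := by
  obtain ⟨y, hy⟩ := hy.eventuallyEq_const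
  have hcompact : ∀ᶠ t in atTop, (γ t).1 ∈ Icc ⊥ ((y, y), y) := hy.mono fun t ht =>
    ⟨bot_le, ⟨(γ t).2.1.trans_eq ht, (γ t).2.2.1.trans_eq ht⟩, ht.le⟩
  have h := eventuallyConst_of_eventually_mem_isCompact (by fun_prop) isCompact_Icc hcompact
  rw [eventuallyConst_atTop] at h ⊢
  simpa only [Subtype.ext_iff] using h

theorem eventuallyConst_or_frequently_eq_edge {γ : K → rhombicQuadrant K} (hγ : Continuous γ)
    (hne : ¬ EventuallyConst γ atTop) :
    EventuallyConst (fun t => (γ t).1.1) atTop ∨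
      (∃ᶠ t in atTop, γ t = rightEdge t) ∨ ∃ᶠ t in atTop, γ t = leftEdge t := by
  have hpos : Continuous fun t => (γ t).1.1.1 := by fun_prop
  have hneg : Continuous fun t => (γ t).1.1.2 := by fun_prop
  have hheight : Continuous fun t => (γ t).1.2 := by fun_prop
  have hy := (eventuallyConst_or_frequently_eq_self hheight).resolve_left
    (mt (eventuallyConst_of_height hγ) hne)
  have hyclosed := isClosed_eq hheight continuous_id
  rcases eventuallyConst_or_frequently_eq_self hpos with hp | hp
  · rcases eventuallyConst_or_frequently_eq_self hneg with hn | hn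
    · exact .inl (hp.prodMk hn)
    · exact .inr (.inr ((frequently_mem_inter_of_isClosed (isClosed_eq hneg continuous_id)
        hyclosed hn hy).mono fun t ht => eq_leftEdge ht.1 ht.2))
  · exact .inr (.inl ((frequently_mem_inter_of_isClosed (isClosed_eq hpos continuous_id)
      hyclosed hp hy).mono fun t ht => eq_rightEdge ht.1 ht.2))

end rhombicQuadrant

variable [NoMaxOrder K] [DenselyOrdered K]

theorem eventuallyConst_slice {F : K × K → rhombicQuadrant K}
    (hF : Continuous F) (hinj : Function.Injective F) (c : K) :
    EventuallyConst (fun t => (F (t, c)).1.1) atTop := by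
  let C : Set K := {c | EventuallyConst (fun t => (F (t, c)).1.1) atTop}
  have hclosed : IsClosed C := isClosed_setOf_eventuallyConst fun t => by fun_prop
  have hfinite : Cᶜ.Finite := by
    refine ((subsingleton_setOf_frequently_eq hF hinj continuous_rightEdge).finite.union
      (subsingleton_setOf_frequently_eq hF hinj continuous_leftEdge).finite).subset fun c hc => ?_
    exact (eventuallyConst_or_frequently_eq_edge (by fun_prop)
      (not_eventuallyConst_atTop_of_injective
        (hinj.comp (Prod.mk_left_injective c)))).resolve_left hc
  have hdense : Dense C := by
    simpa only [← Set.compl_eq_univ_sdiff, compl_compl] using dense_univ.sdiff_finite hfinite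
  change c ∈ C
  rw [← hclosed.closure_eq]
  exact hdense c

theorem frequently_symm_snd_eq_self (h : K × K ≃ₜ rhombicQuadrant K) {ε : K → rhombicQuadrant K}
    (hε : Continuous ε) (hx : ∀ x, ∀ᶠ t in atTop, (ε t).1.1 ≠ x) :
    ∃ᶠ t in atTop, (h.symm (ε t)).2 = t := by
  refine (eventuallyConst_or_frequently_eq_self (by fun_prop)).resolve_left fun h₂ => ?_
  suffices ∃ x, ∃ᶠ t in atTop, (ε t).1.1 = x from this.elim fun x hεx => hεx (hx x)
  rcases eventuallyConst_or_frequently_eq_self (f := fun t => (h.symm (ε t)).1) (by fun_prop)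
    with h₁ | h₁
  · obtain ⟨x, hεx⟩ := ((h₁.prodMk h₂).comp fun p => (h p).1.1).eventuallyEq_const
    refine ⟨x, (hεx.mono fun t ht => ?_).frequently⟩
    simpa using ht
  · obtain ⟨c, hc⟩ := h₂.eventuallyEq_const
    obtain ⟨x, hcx⟩ := (eventuallyConst_slice h.continuous h.injective c).eventuallyEq_const
    refine ⟨x, (h₁.and_eventually (hc.and hcx)).mono fun t ⟨ht₁, ht₂, htx⟩ => ?_⟩
    rw [← h.apply_symm_apply (ε t), show h.symm (ε t) = (t, c) from Prod.ext ht₁ ht₂]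
    exact htx

theorem frequently_symm_eq_diag (h : K × K ≃ₜ rhombicQuadrant K) {ε : K → rhombicQuadrant K}
    (hε : Continuous ε) (hx : ∀ x, ∀ᶠ t in atTop, (ε t).1.1 ≠ x) :
    ∃ᶠ t in atTop, h.symm (ε t) = (t, t) :=
  (frequently_mem_inter_of_isClosed (isClosed_eq (by fun_prop) continuous_id)
    (isClosed_eq (by fun_prop) continuous_id)
    (frequently_symm_snd_eq_self ((Homeomorph.prodComm K K).trans h) hε hx)
    (frequently_symm_snd_eq_self h hε hx)).mono fun _ ht => Prod.ext ht.1 ht.2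

end Quadrants

open rhombicQuadrant in
theorem statement16_general {K : Type*} [ConditionallyCompleteLinearOrderBot K] [DenselyOrdered K]
    [NoMaxOrder K] [TopologicalSpace K] [OrderTopology K] [FirstCountableTopology K]
    [CountableInterFilter (atTop : Filter K)] : IsEmpty (K × K ≃ₜ rhombicQuadrant K) := by
  refine ⟨fun h => ?_⟩
  have hright := frequently_symm_eq_diag h continuous_rightEdge fun x =>
    (eventually_ne_atTop x.1).mono fun t => mt (congrArg Prod.fst)
  have hleft := frequently_symm_eq_diag h continuous_leftEdge fun x =>
    (eventually_ne_atTop x.2).mono fun t => mt (congrArg Prod.snd)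
  have hmeet := frequently_mem_inter_of_isClosed
    (isClosed_eq (h.symm.continuous.comp continuous_rightEdge) (by fun_prop))
    (isClosed_eq (h.symm.continuous.comp continuous_leftEdge) (by fun_prop)) hright hleft
  obtain ⟨t, ⟨ht, ht'⟩, hne⟩ := (hmeet.and_eventually (eventually_ne_atTop ⊥)).exists
  have hedges : rightEdge t = leftEdge t := h.symm.injective (ht.trans ht'.symm)
  exact hne (congrArg (·.1.1.1) hedges)

open Classical in
/-- A linear order with bottom element in which nonempty sets have greatest lower bounds is
conditionally complete; the infimum of the empty set is set to `⊥`. -/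
abbrev conditionallyCompleteLinearOrderBotOfIsGLB {α : Type*} [i₁ : LinearOrder α]
    [i₂ : OrderBot α] (h : ∀ s : Set α, s.Nonempty → ∃ a, IsGLB s a) :
    ConditionallyCompleteLinearOrderBot α where
  __ := i₁
  __ := i₂
  __ := LinearOrder.toLattice
  __ :=
    letI : InfSet α := ⟨fun s => if hs : s.Nonempty then (h s hs).choose else ⊥⟩
    conditionallyCompleteLatticeOfLatticeOfsInf _ fun s _ hs => by
      simpa only [sInf, dif_pos hs] using (h s hs).choose_spec
  csSup_empty := by
    have hne : (upperBounds (∅ : Set α)).Nonempty := ⟨⊥, by simp⟩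
    simpa [sSup, hne] using (h _ hne).choose_spec.1 (show ⊥ ∈ upperBounds ∅ by simp)
  csSup_of_not_bddAbove s hs := by
    rw [BddAbove] at hs
    have hne : (univ : Set α).Nonempty := ⟨⊥, mem_univ _⟩
    simpa [sSup, hs, hne] using (bot_unique ((h _ hne).choose_spec.1 (mem_univ ⊥))).symm
  csInf_of_not_bddBelow s hs := absurd (OrderBot.bddBelow s) hs

theorem exists_isGLB_lex {α β : Type*} [LinearOrder α] [WellFoundedLT α] [LinearOrder β]
    (hβ : ∀ t : Set β, t.Nonempty → ∃ b, IsGLB t b) {s : Set (α ×ₗ β)} (hs : s.Nonempty) :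
    ∃ x, IsGLB s x := by
  obtain ⟨⟨a, b₀⟩, hab₀, ha⟩ := exists_minimalFor_of_wellFoundedLT (· ∈ s) (fun x => (ofLex x).1) hs
  replace ha {x : α ×ₗ β} (hx : x ∈ s) : a ≤ (ofLex x).1 := (le_total _ _).elim id (ha hx)
  obtain ⟨b, hb⟩ := hβ {b | toLex (a, b) ∈ s} ⟨b₀, hab₀⟩
  refine ⟨toLex (a, b), fun x hx => ?_, fun y hy => ?_⟩
  · refine Prod.Lex.le_iff'.2 ⟨ha hx, fun (h : a = (ofLex x).1) => hb.1 ?_⟩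
    subst h
    exact hx
  · exact Prod.Lex.le_iff'.2 ⟨Prod.Lex.monotone_fst _ (toLex (a, b₀)) (hy hab₀),
      fun h => hb.2 fun b' hb' => (Prod.Lex.le_iff'.1 (hy hb')).2 h⟩

theorem exists_mem_between_lex {α β : Type*} [Preorder α] [LinearOrder β] [TopologicalSpace β]
    [OrderClosedTopology β] [DenselyOrdered β] [NoMaxOrder β] {Q : Set β} (hQ : Dense Q)
    {x y : α ×ₗ β} (hxy : x < y) :
    ∃ a ≤ (ofLex y).1, ∃ q ∈ Q, x < toLex (a, q) ∧ toLex (a, q) < y := by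
  rcases Prod.Lex.lt_iff.1 hxy with h | ⟨h, hlt⟩
  · obtain ⟨q, hqQ, hq⟩ := hQ.exists_gt (ofLex x).2
    exact ⟨_, h.le, q, hqQ, Prod.Lex.lt_iff.2 (.inr ⟨rfl, hq⟩), Prod.Lex.lt_iff.2 (.inl h)⟩
  · obtain ⟨q, hqQ, hxq, hqy⟩ := hQ.exists_between hlt
    exact ⟨_, h.le, q, hqQ, Prod.Lex.lt_iff.2 (.inr ⟨rfl, hxq⟩),
      Prod.Lex.lt_iff.2 (.inr ⟨h, hqy⟩)⟩

theorem bddAbove_lex_of_bddAbove_fst {α β : Type*} [Preorder α] [NoMaxOrder α] [Preorder β]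
    [Nonempty β] {s : Set (α ×ₗ β)} (h : BddAbove ((fun x => (ofLex x).1) '' s)) :
    BddAbove s := by
  obtain ⟨a, ha⟩ := h
  obtain ⟨a', haa'⟩ := exists_gt a
  obtain ⟨b⟩ := ‹Nonempty β›
  exact ⟨toLex (a', b), fun x hx =>
    Prod.Lex.le_iff.2 (.inl ((ha (mem_image_of_mem _ hx)).trans_lt haa'))⟩

theorem countableInterFilter_atTop {α : Type*} [Preorder α] [IsDirectedOrder α] [Nonempty α]
    (h : ∀ s : Set α, s.Countable → BddAbove s) : CountableInterFilter (atTop : Filter α) where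
  countable_sInter_mem S hS hmem := by
    choose! b hb using fun s hs => mem_atTop_sets.1 (hmem s hs)
    obtain ⟨B, hB⟩ := h _ (hS.image b)
    refine mem_atTop_sets.2 ⟨B, fun t ht s hs => hb s hs t ?_⟩
    exact (hB (mem_image_of_mem b hs)).trans ht

theorem isCountablyGenerated_nhds_of_exists_between {α : Type*} [LinearOrder α]
    [TopologicalSpace α] [OrderTopology α] {x w : α} (hxw : x < w) {D : Set α} (hD : D.Countable)
    (hbtw : ∀ y z, y < z → z ≤ w → ∃ d ∈ D, y < d ∧ d < z) : (𝓝 x).IsCountablyGenerated := by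
  have : Countable ↥(D ∩ Iio x) := (hD.mono inter_subset_left).to_subtype
  have : Countable ↥(D ∩ Ioi x) := (hD.mono inter_subset_left).to_subtype
  have hleft : ⨅ a ∈ Iio x, 𝓟 (Ioi a) = ⨅ d : ↥(D ∩ Iio x), 𝓟 (Ioi d.1) := by
    refine le_antisymm (le_iInf fun d => iInf₂_le d.1 d.2.2) (le_iInf₂ fun a ha => ?_)
    obtain ⟨d, hd, had, hdx⟩ := hbtw a x ha hxw.le
    exact (iInf_le _ ⟨d, hd, hdx⟩).trans (principal_mono.2 (Ioi_subset_Ioi had.le))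
  have hright : ⨅ b ∈ Ioi x, 𝓟 (Iio b) = ⨅ d : ↥(D ∩ Ioi x), 𝓟 (Iio d.1) := by
    refine le_antisymm (le_iInf fun d => iInf₂_le d.1 d.2.2) (le_iInf₂ fun b hb => ?_)
    obtain ⟨d, hd, hxd, hdb⟩ := hbtw x (min b w) (lt_min hb hxw) (min_le_right _ _)
    exact (iInf_le _ ⟨d, hd, hxd⟩).trans
      (principal_mono.2 (Iio_subset_Iio (hdb.le.trans (min_le_left _ _))))
  rw [nhds_eq_order, hleft, hright]
  infer_instance

namespace Omega1

instance : WellFoundedLT Omega1 :=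
  inferInstanceAs (WellFoundedLT {o : Ordinal.{0} // o < (Cardinal.aleph 1).ord})

instance : NoMaxOrder Omega1 where
  exists_gt a := ⟨⟨Order.succ a.1,
    (Cardinal.isSuccLimit_ord (Cardinal.aleph0_le_aleph 1)).succ_lt a.2⟩, Order.lt_succ a.1⟩

instance : OrderBot Omega1 where
  bot := ⟨0, (Cardinal.isSuccLimit_ord (Cardinal.aleph0_le_aleph 1)).bot_lt⟩
  bot_le a := zero_le (a := a.1)

theorem toOrdinal_lt_omega_one (a : Omega1) : a.toOrdinal < Ordinal.omega 1 :=
  a.2.trans_eq (Cardinal.ord_aleph 1)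

theorem bddAbove_of_countable {s : Set Omega1} (hs : s.Countable) : BddAbove s := by
  have := hs.to_subtype
  have hsup : ⨆ a : s, a.1.toOrdinal < Ordinal.omega 1 :=
    Ordinal.iSup_lt_omega_one fun a => a.1.toOrdinal_lt_omega_one
  exact ⟨⟨_, hsup.trans_eq (Cardinal.ord_aleph 1).symm⟩,
    fun a ha => Ordinal.le_iSup (fun a : s => a.1.toOrdinal) ⟨a, ha⟩⟩

theorem countable_Iio (a : Omega1) : (Iio a).Countable := by
  have hcard : a.toOrdinal.card ≤ Cardinal.aleph0 := by
    rw [← Order.lt_succ_iff, Cardinal.succ_aleph0]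
    exact Cardinal.lt_ord.1 a.2
  have hIio : (Iio a.toOrdinal).Countable := by
    rwa [← Cardinal.le_aleph0_iff_set_countable, Cardinal.mk_Iio_ordinal, Cardinal.lift_le_aleph0]
  exact hIio.preimage Subtype.val_injective

end Omega1

namespace ClosedLongRay

instance inst_s16 : OrderBot ClosedLongRay := inferInstanceAs (OrderBot (Omega1 ×ₗ Ico (0 : ℝ) 1))

instance inst_s16_2 : NoMaxOrder ClosedLongRay := inferInstanceAs (NoMaxOrder (Omega1 ×ₗ Ico (0 : ℝ) 1))

instance : ConditionallyCompleteLinearOrderBot ClosedLongRay :=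
  conditionallyCompleteLinearOrderBotOfIsGLB fun _ hs => exists_isGLB_lex (fun t ht =>
    letI : Inhabited (Ico (0 : ℝ) 1) := ⟨⊥⟩
    ⟨sInf t, isGLB_csInf ht (OrderBot.bddBelow t)⟩) hs

instance : CountableInterFilter (atTop : Filter ClosedLongRay) :=
  countableInterFilter_atTop fun _ hs =>
    bddAbove_lex_of_bddAbove_fst (Omega1.bddAbove_of_countable (hs.image _))

instance : FirstCountableTopology ClosedLongRay where
  nhds_generated_countable x := by
    obtain ⟨w, hxw⟩ := exists_gt x
    obtain ⟨Q, hQ, hQdense⟩ := TopologicalSpace.exists_countable_dense (Ico (0 : ℝ) 1)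
    obtain ⟨a, ha⟩ := exists_gt (ofLex w).1
    refine isCountablyGenerated_nhds_of_exists_between hxw
      (((Omega1.countable_Iio a).prod hQ).image toLex) fun y z hyz hzw => ?_
    obtain ⟨b, hb, q, hq, h⟩ := exists_mem_between_lex hQdense hyz
    exact ⟨toLex (b, q), mem_image_of_mem _
      ⟨(hb.trans (Prod.Lex.monotone_fst _ _ hzw)).trans_lt ha, hq⟩, h⟩

end ClosedLongRay

namespace LongLine

/-- The inclusion of the closed long ray into the long line as the set of nonnegative elements. -/
def ofRay (a : ClosedLongRay) : LongLine := toLex (.inr a)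

theorem neg_ofRay_bot : neg (ofRay ⊥) = ofRay ⊥ := dif_neg fun ⟨_, h⟩ => not_lt_bot h

theorem neg_ofRay_of_pos {a : ClosedLongRay} (ha : ⊥ < a) :
    neg (ofRay a) = toLex (.inl (.toDual ⟨a, ⊥, ha⟩)) := dif_pos ⟨⊥, ha⟩

theorem neg_neg_ofRay (a : ClosedLongRay) : neg (neg (ofRay a)) = ofRay a := by
  rcases eq_bot_or_bot_lt a with rfl | ha
  · rw [neg_ofRay_bot, neg_ofRay_bot]
  · rw [neg_ofRay_of_pos ha]
    rfl

theorem eq_ofRay_or_eq_neg_ofRay (x : LongLine) :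
    (∃ a, x = ofRay a) ∨ ∃ a, ⊥ < a ∧ x = neg (ofRay a) := by
  rcases x with a | a
  · have ha : ⊥ < (OrderDual.ofDual a).1 := a.2.elim fun _ => bot_le.trans_lt
    exact .inr ⟨_, ha, (neg_ofRay_of_pos ha).symm⟩
  · exact .inl ⟨a, rfl⟩

theorem neg_neg (x : LongLine) : neg (neg x) = x := by
  rcases eq_ofRay_or_eq_neg_ofRay x with ⟨a, rfl⟩ | ⟨a, -, rfl⟩
  · exact neg_neg_ofRay a
  · rw [neg_neg_ofRay]

theorem ofRay_le_ofRay {a b : ClosedLongRay} : ofRay a ≤ ofRay b ↔ a ≤ b := Sum.Lex.inr_le_inr_iff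

theorem neg_ofRay_lt_ofRay {a : ClosedLongRay} (ha : ⊥ < a) (b : ClosedLongRay) :
    neg (ofRay a) < ofRay b :=
  neg_ofRay_of_pos ha ▸ Sum.Lex.inl_lt_inr _ _

theorem neg_ofRay_le_ofRay (a b : ClosedLongRay) : neg (ofRay a) ≤ ofRay b := by
  rcases eq_bot_or_bot_lt a with rfl | ha
  · rw [neg_ofRay_bot]
    exact ofRay_le_ofRay.2 bot_le
  · exact (neg_ofRay_lt_ofRay ha b).le

theorem strictAnti_neg_ofRay : StrictAnti fun a => neg (ofRay a) := by
  intro a b hab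
  rcases eq_bot_or_bot_lt a with rfl | ha
  · simpa only [neg_ofRay_bot] using neg_ofRay_lt_ofRay hab ⊥
  · simp only [neg_ofRay_of_pos ha, neg_ofRay_of_pos (ha.trans hab)]
    exact Sum.Lex.inl_lt_inl_iff.2 hab

theorem antitone_neg : Antitone neg := by
  intro x y hxy
  rcases eq_ofRay_or_eq_neg_ofRay x with ⟨a, rfl⟩ | ⟨a, -, rfl⟩ <;>
    rcases eq_ofRay_or_eq_neg_ofRay y with ⟨b, rfl⟩ | ⟨b, hb, rfl⟩
  · exact strictAnti_neg_ofRay.antitone (ofRay_le_ofRay.1 hxy)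
  · exact absurd hxy (neg_ofRay_lt_ofRay hb a).not_ge
  · rw [neg_neg]
    exact neg_ofRay_le_ofRay b a
  · rw [neg_neg, neg_neg, ofRay_le_ofRay]
    exact strictAnti_neg_ofRay.le_iff_ge.1 hxy

theorem neg_le_comm {x y : LongLine} : neg x ≤ y ↔ neg y ≤ x :=
  ⟨fun h => neg_neg x ▸ antitone_neg h, fun h => neg_neg y ▸ antitone_neg h⟩

/-- The involution `x ↦ -x` as an order isomorphism onto the order dual. -/
def negOrderIso : LongLine ≃o LongLineᵒᵈ where
  toFun x := .toDual (neg x)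
  invFun x := neg x.ofDual
  left_inv := neg_neg
  right_inv := neg_neg
  map_rel_iff' := fun {x y} => (neg_le_comm (x := y) (y := neg x)).trans (by rw [neg_neg])

theorem range_ofRay : range ofRay = Ici (ofRay ⊥) := by
  refine (range_subset_iff.2 fun a => ofRay_le_ofRay.2 bot_le).antisymm fun x hx => ?_
  rcases eq_ofRay_or_eq_neg_ofRay x with ⟨a, rfl⟩ | ⟨a, ha, rfl⟩
  · exact mem_range_self a
  · exact absurd hx (neg_ofRay_lt_ofRay ha ⊥).not_ge

theorem continuous_ofRay : Continuous ofRay :=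
  (StrictMono.isEmbedding_of_ordConnected (strictMono_of_le_iff_le fun _ _ => ofRay_le_ofRay.symm)
    (range_ofRay ▸ ordConnected_Ici)).continuous

/-- The positive part `max x 0` of an element of the long line, as an element of the closed long
ray. -/
def posPart (x : LongLine) : ClosedLongRay := Sum.elim (fun _ => ⊥) id (ofLex x)

theorem posPart_ofRay (a : ClosedLongRay) : posPart (ofRay a) = a := rfl

theorem posPart_neg_ofRay (a : ClosedLongRay) : posPart (neg (ofRay a)) = ⊥ := by
  rcases eq_bot_or_bot_lt a with rfl | ha
  · rw [neg_ofRay_bot, posPart_ofRay]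
  · rw [neg_ofRay_of_pos ha]
    rfl

theorem gc_posPart_ofRay : GaloisConnection posPart ofRay := by
  intro x b
  rcases eq_ofRay_or_eq_neg_ofRay x with ⟨a, rfl⟩ | ⟨a, -, rfl⟩
  · rw [posPart_ofRay, ofRay_le_ofRay]
  · simp only [posPart_neg_ofRay, bot_le, neg_ofRay_le_ofRay]

theorem continuous_posPart : Continuous posPart :=
  gc_posPart_ofRay.monotone_l.continuous_of_surjective fun a => ⟨ofRay a, posPart_ofRay a⟩

theorem posPart_eq_bot_or_posPart_neg_eq_bot (x : LongLine) :
    posPart x = ⊥ ∨ posPart (neg x) = ⊥ := by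
  rcases eq_ofRay_or_eq_neg_ofRay x with ⟨a, rfl⟩ | ⟨a, -, rfl⟩
  · exact .inr (posPart_neg_ofRay a)
  · exact .inl (posPart_neg_ofRay a)

theorem ofRay_posPart_of_neg_le {x : LongLine} (hx : neg x ≤ x) : ofRay (posPart x) = x := by
  rcases eq_ofRay_or_eq_neg_ofRay x with ⟨a, rfl⟩ | ⟨a, ha, rfl⟩
  · rw [posPart_ofRay]
  · rw [neg_neg_ofRay] at hx
    exact absurd hx (neg_ofRay_lt_ofRay ha a).not_ge

open Classical in
/-- The element of the long line with positive part `p` and negative part `n`; meaningful if one of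
them is `⊥`. -/
def ofParts (p n : ClosedLongRay) : LongLine := if n ≤ p then ofRay p else neg (ofRay n)

theorem ofParts_posPart_posPart_neg (x : LongLine) : ofParts (posPart x) (posPart (neg x)) = x := by
  rcases eq_ofRay_or_eq_neg_ofRay x with ⟨a, rfl⟩ | ⟨a, ha, rfl⟩
  · rw [posPart_ofRay, posPart_neg_ofRay, ofParts, if_pos bot_le]
  · rw [neg_neg, posPart_ofRay, posPart_neg_ofRay, ofParts, if_neg ha.not_ge]

theorem posPart_ofParts {p n : ClosedLongRay} (h : p = ⊥ ∨ n = ⊥) : posPart (ofParts p n) = p := by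
  unfold ofParts
  split_ifs with hnp
  · exact posPart_ofRay p
  · rw [posPart_neg_ofRay, h.resolve_right fun hn => hnp (hn ▸ bot_le)]

theorem posPart_neg_ofParts {p n : ClosedLongRay} (h : p = ⊥ ∨ n = ⊥) :
    posPart (neg (ofParts p n)) = n := by
  unfold ofParts
  split_ifs with hnp
  · rw [posPart_neg_ofRay, h.elim (fun hp => le_bot_iff.1 (hp ▸ hnp)) id]
  · rw [neg_neg, posPart_ofRay]

theorem continuous_ofParts :
    Continuous fun w : rhombicQuadrant ClosedLongRay => ofParts w.1.1.1 w.1.1.2 := by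
  refine Continuous.if_le (continuous_ofRay.comp (by fun_prop))
    (continuous_neg.comp (continuous_ofRay.comp (by fun_prop))) (by fun_prop) (by fun_prop)
    fun w hw => ?_
  have hbot : w.1.1.1 = ⊥ := w.2.2.2.elim id hw.symm.trans
  rw [hw, hbot, neg_ofRay_bot]

/-- The rhombic quadrant of the long line in terms of positive and negative parts. -/
def rhombicHomeomorph : {z : LongLine × LongLine // neg z.2 ≤ z.1 ∧ z.1 ≤ z.2} ≃ₜ
    rhombicQuadrant ClosedLongRay where
  toFun z := ⟨((posPart z.1.1, posPart (neg z.1.1)), posPart z.1.2),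
    gc_posPart_ofRay.monotone_l z.2.2, gc_posPart_ofRay.monotone_l (neg_le_comm.1 z.2.1),
    posPart_eq_bot_or_posPart_neg_eq_bot z.1.1⟩
  invFun w := ⟨(ofParts w.1.1.1 w.1.1.2, ofRay w.1.2),
    neg_le_comm.1 ((gc_posPart_ofRay _ _).1 ((posPart_neg_ofParts w.2.2.2).trans_le w.2.2.1)),
    (gc_posPart_ofRay _ _).1 ((posPart_ofParts w.2.2.2).trans_le w.2.1)⟩
  left_inv z := Subtype.ext (Prod.ext (ofParts_posPart_posPart_neg z.1.1)
    (ofRay_posPart_of_neg_le (z.2.1.trans z.2.2)))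
  right_inv w := Subtype.ext (Prod.ext
    (Prod.ext (posPart_ofParts w.2.2.2) (posPart_neg_ofParts w.2.2.2)) (posPart_ofRay w.1.2))
  continuous_toFun := by
    have := continuous_posPart
    have := continuous_neg
    fun_prop
  continuous_invFun := by
    have := continuous_ofRay
    have := continuous_ofParts
    fun_prop

end LongLine

/-- The rectangular quadrant `𝕃≥0 × 𝕃≥0` and the rhombic quadrant
`{(x, y) ∈ 𝕃² : -y ≤ x ≤ y}` are not homeomorphic. -/
theorem statement16 :
    IsEmpty ((ClosedLongRay × ClosedLongRay) ≃ₜ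
      {z : LongLine × LongLine // LongLine.neg z.2 ≤ z.1 ∧ z.1 ≤ z.2}) :=
  ⟨fun h => statement16_general.false (h.trans LongLine.rhombicHomeomorph)⟩
end
end
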